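/- Let Γ: R = ⊕_{g∈G} R_g be a fine abelian group grading of the matrix algebra R = Mat_n(F), and let e ∈ R be a graded primitive idempotent of (R,Γ). Then Γ is a φ-grading for some antiautomorphism φ of R if and only if the central graded division algebra eRe is graded isomorphic to Q^{⊗m} (with its ℤ₂^{2m}-grading) for some m ≥ 0 and either n = 2^m (so R = eRe) or n = 2^{m+1}. -/

import Mathlib

/-!
For an idempotent `e` of degree `0`, the operator `x ↦ e x - x e` is a derivation with eigenvalues
among `0, 1, -1` which preserves the components of the grading, so its eigenspaces refine `Γ`. As
`Γ` is fine, every component lies in one eigenspace (`exists_weight`).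

Let `Γ` be a `φ`-grading. On each component `x ↦ e x - x e` is a scalar, and applying `φ` shows that
it equals `x ↦ x φ(e) - φ(e) x`; so `e + φ(e)` is a central element, and comparing idempotents gives
`e = 1` or `φ(e) = 1 - e` (`antiautomorphism_apply_idempotent`). In the second case `φ` carries
`eRe` onto `(1 - e)R(1 - e)`, hence `tr e = tr (1 - e)` because `dim eRe = (tr e)²`
(`finrank_corner`), and `e`, `1 - e` are connected by homogeneous `u`, `v` with `u v = e` and
`v u = 1 - e` (`exists_homogeneous_connection`). Then `x ↦ u φ(x) v` is an antiautomorphism of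
`eRe` preserving its components; if `e = 1`, take `φ` itself. Components of the graded division
algebra `eRe` are one-dimensional, and such an antiautomorphism forces homogeneous elements to
commute up to sign (`IsGradedDivision.comm_of_antiautomorphism`). A central graded division algebra
of this kind is `Q^{⊗m}` (`IsSignedDivision.exists_iso`): commuting copies of `Q` are split off
until their degrees exhaust the support. Dimensions give `n = tr e = 2^m` or `n = 2 tr e = 2^{m+1}`.

Conversely, the transpose on each factor of `Q^{⊗m}` gives an involution `θ` of `eRe` preserving
the components (`exists_corner_involution`). If `n = 2^m`, then `eRe = R` for dimension reasons. If
`n = 2^{m+1}`, then `tr e = tr (1 - e)`, so the elements `u`, `v` above exist and identify `R` with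
the `2 × 2` matrices over `eRe`; applying `θ` to the entries and reflecting in the antidiagonal
preserves all degrees, in contrast to transposition (`exists_involution_of_connection`). In both
cases the resulting `φ` satisfies `φ² = 1`.
-/

open scoped TensorProduct

noncomputable section

def qone (F : Type) [Field F] : Matrix (Fin 2) (Fin 2) F := !![1, 0; 0, -1]
def qtwo (F : Type) [Field F] : Matrix (Fin 2) (Fin 2) F := !![0, 1; 1, 0]
def qthree (F : Type) [Field F] : Matrix (Fin 2) (Fin 2) F := !![0, 1; -1, 0]

/-- The Pauli (division) grading of the quaternion algebra `Q = Mat_2(F)` over `ℤ₂ × ℤ₂`. -/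
def qGrading (F : Type) [Field F] : ZMod 2 × ZMod 2 → Submodule F (Matrix (Fin 2) (Fin 2) F) :=
  fun a =>
    if a = (0, 0) then Submodule.span F {(1 : Matrix (Fin 2) (Fin 2) F)}
    else if a = (1, 0) then Submodule.span F {qone F}
    else if a = (0, 1) then Submodule.span F {qtwo F}
    else Submodule.span F {qthree F}

/-- The homogeneous component of degree `a ∈ ℤ₂^{2m}` of the grading of `Q^{⊗m}`. -/
def qpowComp (F : Type) [Field F] (m : ℕ) (a : Fin m → ZMod 2 × ZMod 2) :
    Submodule F (⨂[F] _i : Fin m, Matrix (Fin 2) (Fin 2) F) :=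
  Submodule.span F {x | ∃ v : Fin m → Matrix (Fin 2) (Fin 2) F,
    (∀ i, v i ∈ qGrading F (a i)) ∧ x = PiTensorProduct.tprod F v}

/-- An abelian group grading of an associative `F`-algebra. -/
def IsGrading {F A : Type} [Field F] [Ring A] [Algebra F A]
    {G : Type} [AddCommGroup G] [DecidableEq G] (gr : G → Submodule F A) : Prop :=
  DirectSum.IsInternal gr ∧ ∀ g h : G, ∀ a ∈ gr g, ∀ b ∈ gr h, a * b ∈ gr (g + h)

/-- `gr₂` refines `gr₁`. -/
def Refines {F A : Type} [Field F] [Ring A] [Algebra F A]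
    {G₂ G₁ : Type} [AddCommGroup G₂] [AddCommGroup G₁]
    (gr₂ : G₂ → Submodule F A) (gr₁ : G₁ → Submodule F A) : Prop :=
  ∀ g : G₂, gr₂ g ≠ ⊥ → ∃ g' : G₁, gr₂ g ≤ gr₁ g'

/-- A grading is fine if every abelian group grading refining it has the same set of
(nonzero) homogeneous components. -/
def IsFine {F A : Type} [Field F] [Ring A] [Algebra F A]
    {G : Type} [AddCommGroup G] [DecidableEq G] (gr : G → Submodule F A) : Prop :=
  ∀ (G₂ : Type) [AddCommGroup G₂] [DecidableEq G₂],
    ∀ gr₂ : G₂ → Submodule F A, IsGrading gr₂ → Refines gr₂ gr →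
      {S : Submodule F A | S ≠ ⊥ ∧ ∃ g, gr₂ g = S} = {S : Submodule F A | S ≠ ⊥ ∧ ∃ g, gr g = S}

/-- The subspace `eRe` of `R`, for an idempotent `e`. -/
def corner (F : Type) {A : Type} [Field F] [Ring A] [Algebra F A] (e : A) :
    Submodule F A :=
  LinearMap.range (LinearMap.mulLeft F e ∘ₗ LinearMap.mulRight F e)


/-! ### Pauli matrices and the algebra `Mat_2(F)` -/

/-- The Pauli matrix spanning the component of degree `c` of `qGrading`. -/
def pauli (F : Type) [Field F] (c : ZMod 2 × ZMod 2) : Matrix (Fin 2) (Fin 2) F :=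
  if c = (0, 0) then 1 else if c = (1, 0) then qone F
  else if c = (0, 1) then qtwo F else qthree F

/-- The nontrivial character `ℤ₂ → {±1} ⊆ F`. -/
def sgn (F : Type) [Field F] (c : ZMod 2) : F := if c = 0 then 1 else -1

section Pauli

variable (F : Type) [Field F]

theorem qGrading_eq (c : ZMod 2 × ZMod 2) : qGrading F c = Submodule.span F {pauli F c} := by
  unfold qGrading pauli
  split_ifs <;> rfl

theorem zmod_two_prod_cases (c : ZMod 2 × ZMod 2) :
    c = (0, 0) ∨ c = (1, 0) ∨ c = (0, 1) ∨ c = (1, 1) := by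
  revert c; decide

theorem pauli_zero_zero : pauli F (0, 0) = 1 := rfl
theorem pauli_one_zero : pauli F (1, 0) = qone F := rfl
theorem pauli_zero_one : pauli F (0, 1) = qtwo F := rfl
theorem pauli_one_one : pauli F (1, 1) = qthree F := rfl

theorem exists_pauli_inv (c : ZMod 2 × ZMod 2) :
    ∃ M : Matrix (Fin 2) (Fin 2) F, pauli F c * M = 1 := by
  rcases zmod_two_prod_cases c with rfl | rfl | rfl | rfl
  · exact ⟨1, by simp [pauli_zero_zero]⟩
  · exact ⟨qone F, by
      simp [pauli_one_zero, qone, Matrix.one_fin_two]⟩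
  · exact ⟨qtwo F, by
      simp [pauli_zero_one, qtwo, Matrix.one_fin_two]⟩
  · exact ⟨-qthree F, by
      simp [pauli_one_one, qthree, Matrix.one_fin_two]⟩

theorem qone_mul_pauli (c : ZMod 2 × ZMod 2) :
    qone F * pauli F c = sgn F c.2 • (pauli F c * qone F) := by
  rcases zmod_two_prod_cases c with rfl | rfl | rfl | rfl <;>
  simp [pauli_zero_zero, pauli_one_zero, pauli_zero_one, pauli_one_one, sgn, qone, qtwo, qthree]

theorem qtwo_mul_pauli (c : ZMod 2 × ZMod 2) :
    qtwo F * pauli F c = sgn F c.1 • (pauli F c * qtwo F) := by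
  rcases zmod_two_prod_cases c with rfl | rfl | rfl | rfl <;>
  simp [pauli_zero_zero, pauli_one_zero, pauli_zero_one, pauli_one_one, sgn, qone, qtwo, qthree]

theorem transpose_pauli (c : ZMod 2 × ZMod 2) :
    ∃ ε : F, (pauli F c).transpose = ε • pauli F c := by
  rcases zmod_two_prod_cases c with rfl | rfl | rfl | rfl
  · exact ⟨1, by simp [pauli_zero_zero]⟩
  · exact ⟨1, by ext i j; fin_cases i <;> fin_cases j <;> simp [pauli_one_zero, qone]⟩
  · exact ⟨1, by ext i j; fin_cases i <;> fin_cases j <;> simp [pauli_zero_one, qtwo]⟩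
  · exact ⟨-1, by ext i j; fin_cases i <;> fin_cases j <;> simp [pauli_one_one, qthree]⟩

theorem qpowComp_eq (m : ℕ) (a : Fin m → ZMod 2 × ZMod 2) :
    qpowComp F m a = Submodule.span F {PiTensorProduct.tprod F fun i => pauli F (a i)} := by
  apply le_antisymm
  · refine Submodule.span_le.2 ?_
    rintro x ⟨v, hv, rfl⟩
    have : ∀ i, ∃ c : F, v i = c • pauli F (a i) := fun i => by
      have := hv i
      rw [qGrading_eq, Submodule.mem_span_singleton] at this
      obtain ⟨c, hc⟩ := this
      exact ⟨c, hc.symm⟩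
    choose c hc using this
    have hv' : v = fun i => c i • pauli F (a i) := funext hc
    rw [hv', MultilinearMap.map_smul_univ]
    exact Submodule.smul_mem _ _ (Submodule.mem_span_singleton_self _)
  · refine Submodule.span_le.2 ?_
    rintro x rfl
    refine Submodule.subset_span ⟨_, fun i => ?_, rfl⟩
    rw [qGrading_eq]
    exact Submodule.mem_span_singleton_self _

variable [CharZero F]

theorem pauli_linearIndependent : LinearIndependent F (pauli F) := by
  have h2 : (2 : F) ≠ 0 := two_ne_zero
  rw [Fintype.linearIndependent_iff]
  intro g hg
  have huniv : (Finset.univ : Finset (ZMod 2 × ZMod 2)) = {(0, 0), (1, 0), (0, 1), (1, 1)} := by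
    decide
  rw [huniv] at hg
  rw [Finset.sum_insert (by decide), Finset.sum_insert (by decide),
    Finset.sum_insert (by decide), Finset.sum_singleton,
    pauli_zero_zero, pauli_one_zero, pauli_zero_one, pauli_one_one] at hg
  have h00 := congrFun (congrFun hg 0) 0
  have h01 := congrFun (congrFun hg 0) 1
  have h10 := congrFun (congrFun hg 1) 0
  have h11 := congrFun (congrFun hg 1) 1
  simp [qone, qtwo, qthree] at h00 h01 h10 h11
  intro c
  rcases zmod_two_prod_cases c with rfl | rfl | rfl | rfl <;> apply mul_left_cancel₀ h2
  · linear_combination h00 + h11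
  · linear_combination h00 - h11
  · linear_combination h01 + h10
  · linear_combination h01 - h10

/-- The Pauli matrices as a basis of `Mat_2(F)`. -/
def pauliBasis : Module.Basis (ZMod 2 × ZMod 2) F (Matrix (Fin 2) (Fin 2) F) :=
  basisOfLinearIndependentOfCardEqFinrank (pauli_linearIndependent F)
    (by simp [Module.finrank_matrix])

theorem pauliBasis_apply (c : ZMod 2 × ZMod 2) : pauliBasis F c = pauli F c := by
  simp [pauliBasis]

theorem finrank_qpow (m : ℕ) :
    Module.finrank F (⨂[F] _i : Fin m, Matrix (Fin 2) (Fin 2) F) = 4 ^ m := by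
  rw [Module.finrank_eq_card_basis (Basis.piTensorProduct fun _ : Fin m => pauliBasis F)]
  simp

end Pauli

section QuaternionHom

variable {F : Type} [Field F] [CharZero F] {A : Type} [Ring A] [Algebra F A]

/-- The homomorphism `Mat_2(F) → A` given by two anticommuting square roots of `1`:
it sends `q₁ ↦ u`, `q₂ ↦ v` and hence `q₃ = q₁ q₂ ↦ u v`. -/
def quatHom (u v : A) (hu : u * u = 1) (hv : v * v = 1) (huv : v * u = -(u * v)) :
    Matrix (Fin 2) (Fin 2) F →ₐ[F] A :=
  AlgHom.ofLinearMap
    { toFun := fun M => ((M 0 0 + M 1 1) / 2) • (1 : A) + ((M 0 0 - M 1 1) / 2) • u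
        + ((M 0 1 + M 1 0) / 2) • v + ((M 0 1 - M 1 0) / 2) • (u * v)
      map_add' := fun M N => by
        simp only [Matrix.add_apply]
        module
      map_smul' := fun c M => by
        simp only [Matrix.smul_apply, smul_eq_mul, RingHom.id_apply]
        module }
    (by simp)
    (fun M N => by
      have h1 : u * (u * v) = v := by rw [← mul_assoc, hu, one_mul]
      have h2 : v * (u * v) = -u := by rw [← mul_assoc, huv, neg_mul, mul_assoc, hv, mul_one]
      have h3 : u * v * u = -v := by rw [mul_assoc, huv, mul_neg, h1]
      have h4 : u * v * v = u := by rw [mul_assoc, hv, mul_one]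
      have h5 : u * v * (u * v) = -1 := by rw [mul_assoc, h2, mul_neg, hu]
      simp only [LinearMap.coe_mk, AddHom.coe_mk, Matrix.mul_apply, Fin.sum_univ_two, mul_add,
        add_mul, smul_mul_smul_comm, hu, hv, huv, h1, h2, h3, h4, h5, mul_one, one_mul]
      module)

theorem quatHom_apply (u v : A) (hu : u * u = 1) (hv : v * v = 1) (huv : v * u = -(u * v))
    (M : Matrix (Fin 2) (Fin 2) F) : quatHom u v hu hv huv M =
      ((M 0 0 + M 1 1) / 2) • (1 : A) + ((M 0 0 - M 1 1) / 2) • u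
        + ((M 0 1 + M 1 0) / 2) • v + ((M 0 1 - M 1 0) / 2) • (u * v) := rfl

theorem quatHom_qone (u v : A) (hu : u * u = 1) (hv : v * v = 1) (huv : v * u = -(u * v)) :
    quatHom u v hu hv huv (qone F) = u := by
  simp [quatHom_apply, qone, ← two_mul]

theorem quatHom_qtwo (u v : A) (hu : u * u = 1) (hv : v * v = 1) (huv : v * u = -(u * v)) :
    quatHom u v hu hv huv (qtwo F) = v := by
  simp [quatHom_apply, qtwo, ← two_mul]

theorem quatHom_qthree (u v : A) (hu : u * u = 1) (hv : v * v = 1) (huv : v * u = -(u * v)) :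
    quatHom u v hu hv huv (qthree F) = u * v := by
  simp [quatHom_apply, qthree, ← two_mul]

end QuaternionHom


/-! ### Graded division algebras with commutation factors `±1` -/

section Division

variable {F : Type} [Field F] {A : Type} [Ring A] [Algebra F A] {G : Type} [AddCommGroup G]

/-- The components `D` contain `1` in degree `0`, are multiplicative, and their nonzero elements
have homogeneous inverses. -/
structure IsGradedDivision (D : G → Submodule F A) : Prop where
  one_mem : (1 : A) ∈ D 0
  mul_mem : ∀ g h : G, ∀ a ∈ D g, ∀ b ∈ D h, a * b ∈ D (g + h)
  inv : ∀ g : G, ∀ x ∈ D g, x ≠ 0 → ∃ y ∈ D (-g), x * y = 1 ∧ y * x = 1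

/-- A grading `D` making `A` a graded division algebra with centre `F`, in which any two homogeneous
elements commute up to a sign. -/
structure IsSignedDivision (D : G → Submodule F A) : Prop extends IsGradedDivision D where
  indep : iSupIndep D
  top : iSup D = ⊤
  comm : ∀ g h : G, ∀ a ∈ D g, ∀ b ∈ D h, a * b = b * a ∨ a * b = -(b * a)
  center : ∀ z : A, (∀ y, z * y = y * z) → ∃ c : F, z = c • (1 : A)

/-- `m` pairwise commuting graded copies of `Q` inside `A`; `δ i` is the degree map of the
`i`-th copy. -/
structure PauliSystem (D : G → Submodule F A) (m : ℕ) where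
  f : Fin m → Matrix (Fin 2) (Fin 2) F →ₐ[F] A
  δ : Fin m → ZMod 2 × ZMod 2 →+ G
  mem : ∀ i c, f i (pauli F c) ∈ D (δ i c)
  commute : ∀ i j, i ≠ j → ∀ x y, Commute (f i x) (f j y)

theorem list_prod_ofFn_mul {m : ℕ} (x y : Fin m → A)
    (h : ∀ i j, i ≠ j → Commute (x i) (y j)) :
    (List.ofFn fun i => x i * y i).prod = (List.ofFn x).prod * (List.ofFn y).prod := by
  induction m with
  | zero => simp
  | succ m ih =>
    rw [List.ofFn_succ, List.ofFn_succ, List.ofFn_succ, List.prod_cons, List.prod_cons,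
      List.prod_cons, ih _ _ fun i j hij => h _ _ (by simpa using hij)]
    have hc : Commute (y 0) (List.ofFn fun i : Fin m => x i.succ).prod := by
      refine Commute.list_prod_right _ _ fun z hz => ?_
      obtain ⟨i, rfl⟩ := (List.mem_ofFn' _ _).1 hz
      exact (h _ _ (Fin.succ_ne_zero i)).symm
    simp only [mul_assoc]
    rw [← mul_assoc (y 0), hc.eq, mul_assoc]

theorem mul_list_prod_ofFn {m : ℕ} (z : A) (x : Fin m → A) (ε : Fin m → F)
    (h : ∀ i, z * x i = ε i • (x i * z)) :
    z * (List.ofFn x).prod = (∏ i, ε i) • ((List.ofFn x).prod * z) := by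
  induction m with
  | zero => simp
  | succ m ih =>
    rw [List.ofFn_succ, List.prod_cons, Fin.prod_univ_succ, ← mul_assoc, h 0, smul_mul_assoc,
      mul_assoc, ih (fun i => x i.succ) (fun i => ε i.succ) fun i => h i.succ]
    rw [mul_smul_comm, smul_smul, mul_assoc]

namespace PauliSystem

variable {D : G → Submodule F A} {m : ℕ} (S : PauliSystem D m)

/-- The homomorphism `Q^{⊗m} → A` multiplying the `m` commuting copies of `Q` together. -/
def hom : (⨂[F] _i : Fin m, Matrix (Fin 2) (Fin 2) F) →ₐ[F] A :=
  PiTensorProduct.liftAlgHom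
    ((MultilinearMap.mkPiAlgebraFin F m A).compLinearMap fun i => (S.f i).toLinearMap)
    (by
      simp only [MultilinearMap.compLinearMap_apply, MultilinearMap.mkPiAlgebraFin_apply,
        AlgHom.toLinearMap_apply, Pi.one_apply, map_one]
      exact List.prod_eq_one fun x hx => by
        obtain ⟨i, rfl⟩ := (List.mem_ofFn' _ _).1 hx; rfl)
    (fun x y => by
      simp only [MultilinearMap.compLinearMap_apply, MultilinearMap.mkPiAlgebraFin_apply,
        AlgHom.toLinearMap_apply, Pi.mul_apply, map_mul]
      exact list_prod_ofFn_mul _ _ fun i j hij => S.commute i j hij _ _)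

theorem hom_tprod (v : Fin m → Matrix (Fin 2) (Fin 2) F) :
    S.hom (PiTensorProduct.tprod F v) = (List.ofFn fun i => S.f i (v i)).prod := by
  simp [hom]

/-- The degree map of `PauliSystem.hom`. -/
def deg : (Fin m → ZMod 2 × ZMod 2) →+ G :=
  ∑ i, (S.δ i).comp (Pi.evalAddMonoidHom _ i)

theorem deg_apply (a : Fin m → ZMod 2 × ZMod 2) : S.deg a = ∑ i, S.δ i (a i) := by
  simp [deg]

/-- The image in `A` of the tensor product of Pauli matrices of multidegree `a`. -/
def monomial (a : Fin m → ZMod 2 × ZMod 2) : A :=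
  S.hom (PiTensorProduct.tprod F fun i => pauli F (a i))

theorem monomial_mem (hD : IsSignedDivision D) (a : Fin m → ZMod 2 × ZMod 2) :
    S.monomial a ∈ D (S.deg a) := by
  have : SetLike.GradedMonoid D :=
    { one_mem := hD.one_mem, mul_mem := fun {g h a b} ha hb => hD.mul_mem g h a ha b hb }
  rw [monomial, hom_tprod, deg_apply, ← List.sum_ofFn]
  exact SetLike.list_prod_ofFn_mem_graded _ _ fun j => S.mem j (a j)

theorem exists_monomial_inv (a : Fin m → ZMod 2 × ZMod 2) :
    ∃ y, S.monomial a * y = 1 := by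
  choose M hM using fun i => exists_pauli_inv F (a i)
  refine ⟨S.hom (PiTensorProduct.tprod F M), ?_⟩
  rw [monomial, ← map_mul, PiTensorProduct.tprod_mul_tprod]
  have : ((fun i => pauli F (a i)) * M) = 1 := funext hM
  rw [this, ← PiTensorProduct.one_def, map_one]

theorem monomial_ne_zero [Nontrivial A] (a : Fin m → ZMod 2 × ZMod 2) : S.monomial a ≠ 0 := by
  intro h
  obtain ⟨y, hy⟩ := S.exists_monomial_inv a
  simp [h] at hy

theorem mul_monomial (i : Fin m) (M : Matrix (Fin 2) (Fin 2) F) (ε : F)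
    (a : Fin m → ZMod 2 × ZMod 2) (h : M * pauli F (a i) = ε • (pauli F (a i) * M)) :
    S.f i M * S.monomial a = ε • (S.monomial a * S.f i M) := by
  rw [monomial, hom_tprod, mul_list_prod_ofFn (S.f i M) _ (fun j => if j = i then ε else 1)]
  · simp
  · intro j
    by_cases hj : j = i
    · subst hj
      rw [if_pos rfl, ← map_mul, h, map_smul, map_mul]
    · rw [if_neg hj, one_smul]
      exact (S.commute i j (Ne.symm hj) _ _).eq

theorem qone_mul_monomial (i : Fin m) (a : Fin m → ZMod 2 × ZMod 2) :
    S.f i (qone F) * S.monomial a = sgn F (a i).2 • (S.monomial a * S.f i (qone F)) :=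
  S.mul_monomial i _ _ a (qone_mul_pauli F _)

theorem qtwo_mul_monomial (i : Fin m) (a : Fin m → ZMod 2 × ZMod 2) :
    S.f i (qtwo F) * S.monomial a = sgn F (a i).1 • (S.monomial a * S.f i (qtwo F)) :=
  S.mul_monomial i _ _ a (qtwo_mul_pauli F _)

end PauliSystem

end Division


set_option linter.unusedSectionVars false

/-! ### The structure theorem: such an algebra is `Q^{⊗m}` -/

section DivisionStructure

variable {F : Type} [Field F] [IsAlgClosed F] [CharZero F]
  {A : Type} [Ring A] [Algebra F A] [FiniteDimensional F A] [Nontrivial A]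
  {G : Type} [AddCommGroup G] {D : G → Submodule F A}

namespace IsGradedDivision

/-- The identity component is a finite-dimensional division algebra over an algebraically closed
field, hence it is `F`. -/
theorem exists_scalar (hD : IsGradedDivision D) {x : A} (hx : x ∈ D 0) :
    ∃ c : F, x = c • (1 : A) := by
  obtain ⟨c, hc⟩ := spectrum.nonempty_of_isAlgClosed_of_finiteDimensional F x
  refine ⟨c, ?_⟩
  by_contra hne
  apply hc
  have h0 : algebraMap F A c - x ≠ 0 := by
    rw [Algebra.algebraMap_eq_smul_one]
    exact sub_ne_zero.2 (Ne.symm hne)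
  have hm : algebraMap F A c - x ∈ D 0 := by
    rw [Algebra.algebraMap_eq_smul_one]
    exact sub_mem (Submodule.smul_mem _ _ hD.one_mem) hx
  obtain ⟨y, -, h1, h2⟩ := hD.inv 0 _ hm h0
  exact ⟨⟨_, y, h1, h2⟩, rfl⟩

theorem exists_smul_eq (hD : IsGradedDivision D) {g : G} {x y : A} (hx : x ∈ D g) (hx0 : x ≠ 0)
    (hy : y ∈ D g) : ∃ c : F, y = c • x := by
  obtain ⟨z, hz, h1, -⟩ := hD.inv g x hx hx0
  obtain ⟨c, hc⟩ := hD.exists_scalar (x := z * y) (by simpa using hD.mul_mem _ _ z hz y hy)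
  refine ⟨c, ?_⟩
  calc y = x * z * y := by rw [h1, one_mul]
    _ = c • x := by rw [mul_assoc, hc, mul_smul_comm, mul_one]

theorem mul_ne_zero (hD : IsGradedDivision D) {g : G} {x y : A} (hx : x ∈ D g)
    (hx0 : x ≠ 0) (hy0 : y ≠ 0) : x * y ≠ 0 := by
  obtain ⟨z, -, -, h2⟩ := hD.inv g x hx hx0
  intro h
  apply hy0
  rw [← one_mul y, ← h2, mul_assoc, h, mul_zero]

/-- Components are one-dimensional, so an antiautomorphism preserving them acts on each by a
scalar; comparing its values on `ab` and `ba` shows that the commutation factor squares to `1`. -/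
theorem comm_of_antiautomorphism (hD : IsGradedDivision D) (θ : A →ₗ[F] A)
    (hinj : Function.Injective θ) (hanti : ∀ x y, θ (x * y) = θ y * θ x)
    (hdeg : ∀ g, ∀ x ∈ D g, θ x ∈ D g) (g h : G) (a : A) (ha : a ∈ D g) (b : A) (hb : b ∈ D h) :
    a * b = b * a ∨ a * b = -(b * a) := by
  by_cases ha0 : a = 0
  · simp [ha0]
  by_cases hb0 : b = 0
  · simp [hb0]
  have hab0 := hD.mul_ne_zero ha ha0 hb0
  have hab := hD.mul_mem _ _ a ha b hb
  have hba : b * a ∈ D (g + h) := add_comm h g ▸ hD.mul_mem _ _ b hb a ha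
  obtain ⟨p, hp⟩ := hD.exists_smul_eq ha ha0 (hdeg g a ha)
  obtain ⟨q, hq⟩ := hD.exists_smul_eq hb hb0 (hdeg h b hb)
  obtain ⟨c, hc⟩ := hD.exists_smul_eq hab hab0 (hdeg _ _ hab)
  obtain ⟨r, hr⟩ := hD.exists_smul_eq hab hab0 hba
  have h1 : c • (a * b) = (q * p) • (b * a) := by
    rw [← hc, hanti, hp, hq, smul_mul_smul_comm]
  have h2 : c • (b * a) = (p * q) • (a * b) := by
    rw [← smul_mul_smul_comm, ← hp, ← hq, ← hanti, hr, map_smul, hc, smul_comm]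
  have hc0 : c ≠ 0 := by
    rintro rfl
    rw [zero_smul] at hc
    exact hab0 (hinj (by rw [hc, map_zero]))
  have h3 : (c * c - (p * q) * (p * q)) • (a * b) = 0 := by
    rw [sub_smul, mul_smul, h1, smul_comm, h2, smul_smul, sub_eq_zero, mul_comm q p]
  have h4 := sub_eq_zero.1 ((smul_eq_zero.1 h3).resolve_right hab0)
  rw [mul_comm q p] at h1
  rcases mul_self_eq_mul_self_iff.1 h4 with h5 | h5
  · left
    rw [← h5] at h1
    exact smul_right_injective A hc0 h1
  · right
    rw [← neg_eq_iff_eq_neg.2 h5, neg_smul, ← smul_neg] at h1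
    exact smul_right_injective A hc0 h1

end IsGradedDivision

namespace IsSignedDivision

theorem degree_unique (hD : IsSignedDivision D) {g h : G} {x : A} (hx : x ≠ 0) (hg : x ∈ D g)
    (hh : x ∈ D h) : g = h := by
  by_contra hne
  exact hx (Submodule.disjoint_def.1 (hD.indep.pairwiseDisjoint hne) x hg hh)

theorem scalar_of_commute (hD : IsSignedDivision D) {x : A}
    (h : ∀ g, ∀ y ∈ D g, x * y = y * x) : ∃ c : F, x = c • (1 : A) := by
  refine hD.center x fun y => ?_
  have hy : y ∈ iSup D := hD.top ▸ Submodule.mem_top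
  induction hy using Submodule.iSup_induction' with
  | mem g y hy => exact h g y hy
  | zero => simp
  | add y z _ _ h1 h2 => rw [mul_add, add_mul, h1, h2]

/-- Squares of homogeneous elements commute with all homogeneous elements, so they are scalars,
and a homogeneous element can be rescaled to have square `1`. -/
theorem exists_normalize (hD : IsSignedDivision D) {g : G} {x : A} (hx : x ∈ D g)
    (hx0 : x ≠ 0) : ∃ r : F, r ≠ 0 ∧ (r • x) * (r • x) = 1 := by
  obtain ⟨c, hc⟩ := hD.scalar_of_commute (x := x * x) fun h y hy => by
    rcases hD.comm g h x hx y hy with h1 | h1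
    · rw [mul_assoc, h1, ← mul_assoc, h1, mul_assoc]
    · rw [mul_assoc, h1, mul_neg, ← mul_assoc, h1, neg_mul, neg_neg, mul_assoc]
  have hc0 : c ≠ 0 := by
    rintro rfl
    exact hD.mul_ne_zero hx hx0 hx0 (by rw [hc, zero_smul])
  obtain ⟨r, hr⟩ := IsAlgClosed.exists_pow_nat_eq c⁻¹ two_pos
  refine ⟨r, ?_, ?_⟩
  · rintro rfl
    simp [eq_comm, hc0] at hr
  · rw [smul_mul_smul_comm, hc, smul_smul, ← sq, hr, inv_mul_cancel₀ hc0, one_smul]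

theorem add_self_eq_zero (hD : IsSignedDivision D) {g : G} {x : A} (hx : x ∈ D g)
    (h : x * x = 1) : g + g = 0 :=
  hD.degree_unique one_ne_zero (h ▸ hD.mul_mem _ _ x hx x hx) hD.one_mem

end IsSignedDivision

/-- The homomorphism `ℤ₂² → G` with prescribed values of order dividing two at the two
generators. -/
def degHom (s t : G) (hs : s + s = 0) (ht : t + t = 0) : ZMod 2 × ZMod 2 →+ G :=
  (ZMod.lift 2 ⟨zmultiplesHom G s, by simp [two_zsmul, hs]⟩).coprod
    (ZMod.lift 2 ⟨zmultiplesHom G t, by simp [two_zsmul, ht]⟩)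

theorem degHom_apply (s t : G) (hs : s + s = 0) (ht : t + t = 0) (k l : ℤ) :
    degHom s t hs ht (k, l) = k • s + l • t := by
  simp [degHom]

namespace PauliSystem

variable {m : ℕ} (S : PauliSystem D m)

theorem sgn_eq_one {c : ZMod 2} (h : sgn F c = 1) : c = 0 := by
  by_contra hc
  rw [sgn, if_neg hc] at h
  have : (2 : F) = 0 := by linear_combination -h
  exact two_ne_zero this

theorem deg_injective (hD : IsSignedDivision D) : Function.Injective S.deg := by
  rw [injective_iff_map_eq_zero]
  intro a ha
  have hm := S.monomial_mem hD a
  rw [ha] at hm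
  obtain ⟨c, hc⟩ := hD.exists_scalar hm
  have hcom : ∀ y, S.monomial a * y = y * S.monomial a := by
    intro y; rw [hc]; simp
  have key : ∀ (y : A) (ε : F) (g : G), y ∈ D g → y * y = 1 →
      y * S.monomial a = ε • (S.monomial a * y) → ε = 1 := by
    intro y ε g hy hyy h
    have hy0 : y ≠ 0 := by rintro rfl; simp at hyy
    have h0 := hD.mul_ne_zero hy hy0 (S.monomial_ne_zero a)
    rw [hcom] at h
    have h' : (ε - 1) • (y * S.monomial a) = 0 := by rw [sub_smul, ← h, one_smul, sub_self]
    rcases smul_eq_zero.1 h' with h' | h'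
    · exact sub_eq_zero.1 h'
    · exact absurd h' h0
  funext i
  have h1 := key (S.f i (qone F)) _ _ (S.mem i (1, 0))
    (by rw [← map_mul, ← map_one (S.f i)]; congr 1; simp [qone, Matrix.one_fin_two])
    (S.qone_mul_monomial i a)
  have h2 := key (S.f i (qtwo F)) _ _ (S.mem i (0, 1))
    (by rw [← map_mul, ← map_one (S.f i)]; congr 1; simp [qtwo, Matrix.one_fin_two])
    (S.qtwo_mul_monomial i a)
  exact Prod.ext (sgn_eq_one h2) (sgn_eq_one h1)

theorem hom_injective (hD : IsSignedDivision D) : Function.Injective S.hom := by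
  have hli : LinearIndependent F S.monomial :=
    (hD.indep.comp (S.deg_injective hD)).linearIndependent _ (fun a => S.monomial_mem hD a)
      fun a => S.monomial_ne_zero a
  let b := Basis.piTensorProduct fun _ : Fin m => pauliBasis F
  have hb : S.hom.toLinearMap ∘ b = S.monomial := by
    funext a
    simp [b, monomial, pauliBasis_apply]
  rw [injective_iff_map_eq_zero]
  intro x hx
  have h1 : ∑ a, b.repr x a • S.monomial a = 0 := by
    have h := congrArg S.hom (b.sum_repr x)
    rw [map_sum, hx] at h
    rw [← h, ← hb]
    simp
  have h2 := Fintype.linearIndependent_iff.1 hli _ h1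
  exact b.ext_elem fun a => by simp [h2 a]

theorem card_le (hD : IsSignedDivision D) (T : PauliSystem D m) : 4 ^ m ≤ Module.finrank F A := by
  rw [← finrank_qpow F m]
  exact LinearMap.finrank_le_finrank_of_injective (f := T.hom.toLinearMap) (T.hom_injective hD)

/-- Multiplying a homogeneous element by a suitable monomial makes it commute with all the given
copies of `Q`. -/
theorem exists_adjust (hD : IsSignedDivision D) {g : G} {x : A} (hx : x ∈ D g) :
    ∃ a, ∀ i M, Commute (S.f i M) (S.monomial a * x) := by
  classical
  have hs1 : ∀ i, ∃ c : ZMod 2, S.f i (qone F) * x = sgn F c • (x * S.f i (qone F)) := fun i => by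
    rcases hD.comm _ _ _ (S.mem i (1, 0)) x hx with h | h
    · exact ⟨0, by simpa [sgn, pauli_one_zero] using h⟩
    · exact ⟨1, by simpa [sgn, pauli_one_zero] using h⟩
  have hs2 : ∀ i, ∃ c : ZMod 2, S.f i (qtwo F) * x = sgn F c • (x * S.f i (qtwo F)) := fun i => by
    rcases hD.comm _ _ _ (S.mem i (0, 1)) x hx with h | h
    · exact ⟨0, by simpa [sgn, pauli_zero_one] using h⟩
    · exact ⟨1, by simpa [sgn, pauli_zero_one] using h⟩
  choose c1 hc1 using hs1
  choose c2 hc2 using hs2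
  have hsq : ∀ c : ZMod 2, sgn F c * sgn F c = 1 := fun c => by
    unfold sgn; split_ifs <;> simp
  refine ⟨fun i => (c2 i, c1 i), fun i M => ?_⟩
  set w := S.monomial fun i => (c2 i, c1 i)
  have h1 : Commute (S.f i (qone F)) (w * x) := by
    have := S.qone_mul_monomial i fun i => (c2 i, c1 i)
    change _ * (w * x) = w * x * _
    rw [← mul_assoc, this, smul_mul_assoc, mul_assoc, hc1, mul_smul_comm, smul_smul, hsq, one_smul,
      mul_assoc]
  have h2 : Commute (S.f i (qtwo F)) (w * x) := by
    have := S.qtwo_mul_monomial i fun i => (c2 i, c1 i)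
    change _ * (w * x) = w * x * _
    rw [← mul_assoc, this, smul_mul_assoc, mul_assoc, hc2, mul_smul_comm, smul_smul, hsq, one_smul,
      mul_assoc]
  have h3 : Commute (S.f i (qthree F)) (w * x) := by
    have : qthree F = qone F * qtwo F := by simp [qone, qtwo, qthree]
    rw [this, map_mul]
    exact h1.mul_left h2
  have hM := (pauliBasis F).sum_repr M
  rw [← hM, map_sum]
  refine Commute.sum_left _ _ _ fun c _ => ?_
  rw [map_smul, pauliBasis_apply]
  refine Commute.smul_left ?_ _
  rcases zmod_two_prod_cases c with rfl | rfl | rfl | rfl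
  · rw [pauli_zero_zero, map_one]; exact Commute.one_left _
  · exact h1
  · exact h2
  · exact h3

theorem commute_monomial {y : A} (h : ∀ i M, Commute (S.f i M) y)
    (a : Fin m → ZMod 2 × ZMod 2) : Commute (S.monomial a) y := by
  rw [monomial, hom_tprod]
  refine Commute.list_prod_left _ _ fun z hz => ?_
  obtain ⟨i, rfl⟩ := (List.mem_ofFn' _ _).1 hz
  exact h _ _

/-- Two anticommuting homogeneous elements that commute with a Pauli system extend it. -/
theorem extend (hD : IsSignedDivision D) {s t : G} {y z : A} (hy : y ∈ D s) (hz : z ∈ D t)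
    (hy0 : y ≠ 0) (hz0 : z ≠ 0) (hyz : z * y = -(y * z))
    (hcy : ∀ i M, Commute (S.f i M) y) (hcz : ∀ i M, Commute (S.f i M) z) :
    Nonempty (PauliSystem D (m + 1)) := by
  obtain ⟨r, hr, hyy⟩ := hD.exists_normalize hy hy0
  obtain ⟨q, hq, hzz⟩ := hD.exists_normalize hz hz0
  have hy' := (D s).smul_mem r hy
  have hz' := (D t).smul_mem q hz
  have hs := hD.add_self_eq_zero hy' hyy
  have ht := hD.add_self_eq_zero hz' hzz
  have hanti : (q • z) * (r • y) = -((r • y) * (q • z)) := by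
    rw [smul_mul_smul_comm, smul_mul_smul_comm, hyz, smul_neg, mul_comm]
  let f₀ : Matrix (Fin 2) (Fin 2) F →ₐ[F] A := quatHom (r • y) (q • z) hyy hzz hanti
  have hc0 : ∀ i M N, Commute (S.f i M) (f₀ N) := by
    intro i M N
    have h1 := (hcy i M).smul_right r
    have h2 := (hcz i M).smul_right q
    simp only [f₀, quatHom_apply]
    exact ((((Commute.one_right _).smul_right _).add_right (h1.smul_right _)).add_right
      (h2.smul_right _)).add_right ((h1.mul_right h2).smul_right _)
  refine ⟨⟨Fin.cons f₀ S.f, Fin.cons (degHom s t hs ht) S.δ, fun i c => ?_, fun i j hij M N => ?_⟩⟩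
  · refine Fin.cases ?_ (fun i => ?_) i
    · simp only [Fin.cons_zero]
      rcases zmod_two_prod_cases c with rfl | rfl | rfl | rfl
      · have : degHom s t hs ht (0, 0) = 0 := map_zero _
        rw [this, pauli_zero_zero, map_one]
        exact hD.one_mem
      · have := degHom_apply s t hs ht 1 0
        simp only [Int.cast_one, Int.cast_zero, one_zsmul, zero_zsmul, add_zero] at this
        rw [this, pauli_one_zero, quatHom_qone]
        exact hy'
      · have := degHom_apply s t hs ht 0 1
        simp only [Int.cast_one, Int.cast_zero, one_zsmul, zero_zsmul, zero_add] at this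
        rw [this, pauli_zero_one, quatHom_qtwo]
        exact hz'
      · have := degHom_apply s t hs ht 1 1
        simp only [Int.cast_one, one_zsmul] at this
        rw [this, pauli_one_one, quatHom_qthree]
        exact hD.mul_mem _ _ _ hy' _ hz'
    · simpa using S.mem i c
  · revert hij
    refine Fin.cases ?_ (fun i => ?_) i <;> refine Fin.cases ?_ (fun j => ?_) j
    · intro h; exact absurd rfl h
    · intro _; simpa using (hc0 j N M).symm
    · intro _; simpa using hc0 i M N
    · intro h
      simpa using S.commute i j (fun h' => h (by rw [h'])) M N

/-- A Pauli system whose degrees do not exhaust the support extends: a homogeneous element of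
missing degree, adjusted to commute with the system, is not central, and a homogeneous element
anticommuting with it can be adjusted in the same way. -/
theorem extend_of_not_surj (hD : IsSignedDivision D) {g : G} (hg : D g ≠ ⊥)
    (hne : ∀ a, S.deg a ≠ g) : Nonempty (PauliSystem D (m + 1)) := by
  obtain ⟨x, hx, hx0⟩ := Submodule.exists_mem_ne_zero_of_ne_bot hg
  obtain ⟨a, ha⟩ := S.exists_adjust hD hx
  have hy := hD.mul_mem _ _ _ (S.monomial_mem hD a) _ hx
  have hy0 := hD.mul_ne_zero (S.monomial_mem hD a) (S.monomial_ne_zero a) hx0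
  set y := S.monomial a * x
  have hex : ∃ h, ∃ z ∈ D h, y * z ≠ z * y := by
    by_contra hcon
    push Not at hcon
    obtain ⟨c, hc⟩ := hD.scalar_of_commute hcon
    have h0 : y ∈ D 0 := hc ▸ Submodule.smul_mem _ _ hD.one_mem
    have := hD.degree_unique hy0 hy h0
    apply hne (-a)
    rw [map_neg, neg_eq_iff_add_eq_zero, this]
  obtain ⟨h, z, hz, hyz⟩ := hex
  have hz0 : z ≠ 0 := by rintro rfl; simp at hyz
  obtain ⟨b, hb⟩ := S.exists_adjust hD hz
  have hz' := hD.mul_mem _ _ _ (S.monomial_mem hD b) _ hz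
  have hz0' := hD.mul_ne_zero (S.monomial_mem hD b) (S.monomial_ne_zero b) hz0
  refine S.extend hD hy hz' hy0 hz0' ?_ ha hb
  have hanti : y * z = -(z * y) := (hD.comm _ _ y hy z hz).resolve_left hyz
  have hcm := S.commute_monomial ha b
  rw [mul_assoc (S.monomial b) z y, ← mul_assoc y, ← hcm.eq, mul_assoc (S.monomial b) y z, hanti,
    mul_neg, neg_neg]

end PauliSystem

/-- A graded division algebra with centre `F` and commutation factors `±1` is graded isomorphic
to `Q^{⊗m}`. -/
theorem IsSignedDivision.exists_iso (hD : IsSignedDivision D) :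
    ∃ (m : ℕ) (Ψ : (⨂[F] _i : Fin m, Matrix (Fin 2) (Fin 2) F) →ₐ[F] A)
      (d : (Fin m → ZMod 2 × ZMod 2) →+ G), Function.Bijective Ψ ∧ Function.Injective d ∧
      (∀ a, D (d a) ≠ ⊥) ∧ (∀ g, D g ≠ ⊥ → ∃ a, d a = g) ∧
      ∀ a, Submodule.map Ψ.toLinearMap (qpowComp F m a) = D (d a) := by
  have hmax : ∃ (m : ℕ) (S : PauliSystem D m), ∀ g, D g ≠ ⊥ → ∃ a, S.deg a = g := by
    by_contra hcon
    push Not at hcon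
    have hall : ∀ m, Nonempty (PauliSystem D m) := by
      intro m
      induction m with
      | zero => exact ⟨⟨Fin.elim0, Fin.elim0, fun i => i.elim0, fun i => i.elim0⟩⟩
      | succ m ih =>
        obtain ⟨S⟩ := ih
        obtain ⟨g, hg, hne⟩ := hcon m S
        exact S.extend_of_not_surj hD hg hne
    obtain ⟨S⟩ := hall (Module.finrank F A)
    exact absurd (PauliSystem.card_le hD S) (not_le.2 (Nat.lt_pow_self (a := 4) (by norm_num)))
  obtain ⟨m, S, hS⟩ := hmax
  have hspan : ∀ a, Submodule.span F {S.monomial a} = D (S.deg a) := by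
    intro a
    apply le_antisymm
    · rw [Submodule.span_singleton_le_iff_mem]
      exact S.monomial_mem hD a
    · intro y hy
      obtain ⟨c, rfl⟩ := hD.exists_smul_eq (S.monomial_mem hD a) (S.monomial_ne_zero a) hy
      exact Submodule.smul_mem _ _ (Submodule.mem_span_singleton_self _)
  have hmap : ∀ a, Submodule.map S.hom.toLinearMap (qpowComp F m a) = D (S.deg a) := by
    intro a
    rw [qpowComp_eq, Submodule.map_span, Set.image_singleton, ← hspan]
    rfl
  refine ⟨m, S.hom, S.deg, ⟨S.hom_injective hD, ?_⟩, S.deg_injective hD, fun a h => ?_, hS, hmap⟩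
  · have : LinearMap.range S.hom.toLinearMap = ⊤ := by
      rw [eq_top_iff, ← hD.top]
      refine iSup_le fun g => ?_
      by_cases hg : D g = ⊥
      · rw [hg]; exact bot_le
      · obtain ⟨a, rfl⟩ := hS g hg
        rw [← hmap]
        exact LinearMap.map_le_range
    exact LinearMap.range_eq_top.1 this
  · have := S.monomial_mem hD a
    rw [h, Submodule.mem_bot] at this
    exact S.monomial_ne_zero a this

end DivisionStructure


/-! ### Gradings and the weights of an idempotent -/

section Grading

variable {F : Type} [Field F] {A : Type} [Ring A] [Algebra F A]

theorem mem_corner_iff {e : A} (hidem : e * e = e) {x : A} :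
    x ∈ corner F e ↔ e * x = x ∧ x * e = x := by
  constructor
  · rintro ⟨y, rfl⟩
    simp only [LinearMap.comp_apply, LinearMap.mulLeft_apply, LinearMap.mulRight_apply]
    constructor
    · rw [← mul_assoc, hidem]
    · rw [mul_assoc, mul_assoc, hidem]
  · rintro ⟨h1, h2⟩
    exact ⟨x, by simp [h1, h2]⟩

theorem mul_mul_mem_corner (e x : A) : e * x * e ∈ corner F e :=
  ⟨x, by simp [mul_assoc]⟩

variable {G : Type} [AddCommGroup G] [DecidableEq G] {gr : G → Submodule F A}

namespace IsGrading

theorem iSup_eq_top (h : IsGrading gr) : iSup gr = ⊤ := h.1.submodule_iSup_eq_top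

theorem indep (h : IsGrading gr) : iSupIndep gr := h.1.submodule_iSupIndep

theorem linearMap_ext (h : IsGrading gr) {B : Type} [AddCommGroup B] [Module F B]
    {L M : A →ₗ[F] B} (hL : ∀ g, ∀ x ∈ gr g, L x = M x) (x : A) : L x = M x := by
  have hx : x ∈ iSup gr := h.iSup_eq_top ▸ Submodule.mem_top
  induction hx using Submodule.iSup_induction' with
  | mem g x hx => exact hL g x hx
  | zero => simp
  | add y z _ _ h1 h2 => rw [map_add, map_add, h1, h2]

/-- The degree-zero component of `1` acts as a left identity on homogeneous elements, so it
is `1`. -/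
theorem one_mem (h : IsGrading gr) : (1 : A) ∈ gr 0 := by
  classical
  let := h.1.chooseDecomposition
  have key : ∀ g, ∀ x ∈ gr g, ((DirectSum.decompose gr (1 : A) 0 : gr 0) : A) * x = x := by
    intro g x hx
    have h1 : x = ∑ i ∈ (DirectSum.decompose gr (1 : A)).support,
        (DirectSum.decompose gr (1 : A) i : A) * x := by
      rw [← Finset.sum_mul, DirectSum.sum_support_decompose, one_mul]
    have hm : ∀ i, (DirectSum.decompose gr (1 : A) i : A) * x ∈ gr (i + g) := fun i =>
      h.2 _ _ _ (SetLike.coe_mem _) _ hx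
    let P : A →ₗ[F] A := (gr g).subtype ∘ₗ DirectSum.component F G _ g ∘ₗ
      (DirectSum.decomposeLinearEquiv gr).toLinearMap
    have hP : ∀ y, P y = (DirectSum.decompose gr y g : A) := fun y => rfl
    have h2 := congrArg P h1
    rw [map_sum] at h2
    simp only [hP] at h2
    rw [DirectSum.decompose_of_mem_same _ hx, Finset.sum_eq_single 0] at h2
    · have h0 := hm 0
      rw [zero_add] at h0
      rw [DirectSum.decompose_of_mem_same _ h0] at h2
      exact h2.symm
    · intro i _ hi
      exact DirectSum.decompose_of_mem_ne _ (hm i) (by simpa using hi)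
    · intro h0
      have : (DirectSum.decompose gr (1 : A) 0 : A) = 0 := by simpa using h0
      rw [this, zero_mul, DirectSum.decompose_zero]
      rfl
  have h1 := h.linearMap_ext (L := LinearMap.mulLeft F _) (M := LinearMap.id) key 1
  simp only [LinearMap.mulLeft_apply, mul_one, LinearMap.id_apply] at h1
  rw [← h1]
  exact SetLike.coe_mem _

theorem mul_mem (h : IsGrading gr) {g k : G} {a b : A} (ha : a ∈ gr g) (hb : b ∈ gr k) :
    a * b ∈ gr (g + k) := h.2 g k a ha b hb

theorem zero_mul_mem (h : IsGrading gr) {g : G} {a b : A} (ha : a ∈ gr 0) (hb : b ∈ gr g) :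
    a * b ∈ gr g := by simpa using h.mul_mem ha hb

theorem mul_zero_mem (h : IsGrading gr) {g : G} {a b : A} (ha : a ∈ gr g) (hb : b ∈ gr 0) :
    a * b ∈ gr g := by simpa using h.mul_mem ha hb

/-- The inverse in `eAe` of a homogeneous element is homogeneous. -/
theorem inv_mem (h : IsGrading gr) {e : A} (he : e ∈ gr 0) (hidem : e * e = e) {g : G} {x y : A}
    (hx : x ∈ gr g) (hy : y ∈ corner F e) (h1 : x * y = e) (h2 : y * x = e) :
    y ∈ gr (-g) := by
  let : GradedRing gr :=
    { one_mem := h.one_mem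
      mul_mem := fun {i j a b} ha hb => h.2 i j a ha b hb
      toDecomposition := h.1.chooseDecomposition }
  rw [mem_corner_iff hidem] at hy
  have h3 := DirectSum.coe_decompose_mul_add_of_left_mem gr (i := g) (j := -g) (b := y) hx
  rw [h1, add_neg_cancel, DirectSum.decompose_of_mem_same _ he] at h3
  set z : A := (DirectSum.decompose gr y (-g) : A) with hz
  have hzm : z ∈ gr (-g) := SetLike.coe_mem _
  have h4 : y = e * z := by
    rw [← h2, mul_assoc, ← h3, hy.2]
  rw [h4]
  exact h.zero_mul_mem he hzm

end IsGrading

/-- Splitting the components of a grading into the eigenspaces of `x ↦ e x - x e` yields a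
refinement graded by `ℤ × G`, so for a fine grading `e` acts on each component by an integral
weight. -/
theorem exists_weight [CharZero F] (h : IsGrading gr) (hfine : IsFine gr) {e : A} (he : e ∈ gr 0)
    (hidem : e * e = e) (g : G) : ∃ k : ℤ, ∀ x ∈ gr g, e * x - x * e = (k : F) • x := by
  let T : Module.End F A := LinearMap.mulLeft F e - LinearMap.mulRight F e
  have hT : ∀ x, T x = e * x - x * e := fun x => by simp [T]
  let gr₂ : ℤ × G → Submodule F A := fun p => T.eigenspace (p.1 : F) ⊓ gr p.2
  have hmem : ∀ k g x, x ∈ gr₂ (k, g) ↔ e * x - x * e = (k : F) • x ∧ x ∈ gr g := by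
    intro k g x
    simp only [gr₂, Submodule.mem_inf, Module.End.mem_eigenspace_iff, hT]
  have hmul : ∀ p q : ℤ × G, ∀ a ∈ gr₂ p, ∀ b ∈ gr₂ q, a * b ∈ gr₂ (p + q) := by
    rintro ⟨k, g⟩ ⟨l, r⟩ a ha b hb
    rw [hmem] at ha hb
    rw [Prod.mk_add_mk, hmem]
    refine ⟨?_, h.mul_mem ha.2 hb.2⟩
    calc e * (a * b) - a * b * e = (e * a - a * e) * b + a * (e * b - b * e) := by noncomm_ring
      _ = _ := by rw [ha.1, hb.1, smul_mul_assoc, mul_smul_comm, ← add_smul]; push_cast; rfl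
  have hind : iSupIndep gr₂ := by
    have h1 : iSupIndep fun k : ℤ => T.eigenspace (k : F) :=
      T.eigenspaces_iSupIndep.comp Int.cast_injective
    let E : ℤ → Submodule F A := fun k => T.eigenspace (k : F)
    let f : (b : Bool) → (bif b then ℤ else G) → Submodule F A
      | true => E
      | false => gr
    have h2 := iSupIndep.iInf f fun b => by cases b; exacts [h.indep, h1]
    let j : ℤ × G → (b : Bool) → (bif b then ℤ else G) := fun p b =>
      match b with
      | true => p.1
      | false => p.2
    have hj : Function.Injective j := fun p q hpq =>
      Prod.ext (congrFun hpq true) (congrFun hpq false)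
    convert h2.comp hj using 1
    funext p
    simp only [Function.comp_apply, iInf_bool_eq]
    rfl
  have htop : iSup gr₂ = ⊤ := by
    rw [eq_top_iff, ← h.iSup_eq_top]
    refine iSup_le fun g x hx => ?_
    have hex := h.zero_mul_mem he hx
    have hxe := h.mul_zero_mem hx he
    have hexe := h.mul_zero_mem hex he
    -- the Peirce decomposition of `x`, grouped by weights `0`, `1` and `-1`
    have hs : x = (e * x * e + (x - e * x - x * e + e * x * e)) + (e * x - e * x * e) +
        (x * e - e * x * e) := by abel
    have e1 : e * (e * x) = e * x := by rw [← mul_assoc, hidem]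
    have e2 : ∀ y, y * e * e = y * e := fun y => by rw [mul_assoc, hidem]
    have e3 : e * (e * x * e) = e * x * e := by rw [← mul_assoc, e1]
    have e4 : e * (x * e) = e * x * e := (mul_assoc _ _ _).symm
    rw [hs]
    refine add_mem (add_mem ?_ ?_) ?_
    · refine Submodule.mem_iSup_of_mem (0, g) ((hmem _ _ _).2 ⟨?_, ?_⟩)
      · simp only [mul_add, mul_sub, add_mul, sub_mul, e1, e2, e3, e4, Int.cast_zero, zero_smul]
        abel
      · exact add_mem hexe (add_mem (sub_mem (sub_mem hx hex) hxe) hexe)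
    · refine Submodule.mem_iSup_of_mem (1, g) ((hmem _ _ _).2 ⟨?_, sub_mem hex hexe⟩)
      simp only [mul_sub, sub_mul, e1, e2, e3, Int.cast_one, one_smul]
      abel
    · refine Submodule.mem_iSup_of_mem (-1, g) ((hmem _ _ _).2 ⟨?_, sub_mem hxe hexe⟩)
      simp only [mul_sub, sub_mul, e2, e3, e4, Int.cast_neg, Int.cast_one, neg_smul, one_smul]
      abel
  have hgr₂ : IsGrading gr₂ :=
    ⟨DirectSum.isInternal_submodule_of_iSupIndep_of_iSup_eq_top hind htop, hmul⟩
  have hset := hfine (ℤ × G) gr₂ hgr₂ fun p _ => ⟨p.2, inf_le_right⟩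
  by_cases hg : gr g = ⊥
  · refine ⟨0, fun x hx => ?_⟩
    rw [hg, Submodule.mem_bot] at hx
    simp [hx]
  · have hin : gr g ∈ {S : Submodule F A | S ≠ ⊥ ∧ ∃ p, gr₂ p = S} := hset ▸ ⟨hg, g, rfl⟩
    obtain ⟨-, ⟨k, r⟩, hp⟩ := hin
    refine ⟨k, fun x hx => ?_⟩
    rw [← hp, hmem] at hx
    exact hx.1

end Grading

/-! ### Idempotents of the matrix algebra and their traces -/

section Matrices

variable {F : Type} [Field F] {n : ℕ}

theorem mul_single_mul_apply (p q : Matrix (Fin n) (Fin n) F) (i j a b : Fin n) :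
    (p * Matrix.single i j (1 : F) * q) a b = p a i * q j b := by
  rw [Matrix.mul_apply, Finset.sum_eq_single j]
  · simp
  · intro k _ hk
    simp [Matrix.mul_single_apply_of_ne, hk]
  · simp

theorem eq_zero_or_eq_zero_of_mul_mul {p q : Matrix (Fin n) (Fin n) F}
    (h : ∀ x, p * x * q = 0) : p = 0 ∨ q = 0 := by
  by_contra hcon
  push Not at hcon
  obtain ⟨hp, hq⟩ := hcon
  apply hp
  ext a i
  by_contra hai
  apply hq
  ext j b
  have := mul_single_mul_apply p q i j a b
  rw [h] at this
  exact (mul_eq_zero.1 this.symm).resolve_left hai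

/-- The map `x ↦ p x q` is a projection with trace `tr p · tr q`. -/
theorem finrank_range_mul_mul {p q : Matrix (Fin n) (Fin n) F} (hp : p * p = p) (hq : q * q = q) :
    (Module.finrank F (LinearMap.range (LinearMap.mulLeft F p ∘ₗ LinearMap.mulRight F q)) : F) =
      p.trace * q.trace := by
  set T := LinearMap.mulLeft F p ∘ₗ LinearMap.mulRight F q with hT
  have hTx : ∀ x, T x = p * x * q := fun x => by simp [hT, mul_assoc]
  have hproj : LinearMap.IsProj (LinearMap.range T) T := by
    refine ⟨fun x => LinearMap.mem_range_self _ _, ?_⟩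
    rintro _ ⟨x, rfl⟩
    rw [hTx, hTx]
    calc p * (p * x * q) * q = (p * p) * x * (q * q) := by simp only [mul_assoc]
      _ = _ := by rw [hp, hq]
  rw [← hproj.trace, LinearMap.trace_eq_matrix_trace F (Matrix.stdBasis F (Fin n) (Fin n)),
    Matrix.trace]
  simp only [Matrix.diag_apply, LinearMap.toMatrix_apply, Fintype.sum_prod_type]
  rw [Matrix.trace, Matrix.trace, Finset.sum_mul_sum]
  refine Finset.sum_congr rfl fun i _ => Finset.sum_congr rfl fun j _ => ?_
  rw [Matrix.stdBasis_eq_single, hTx]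
  have : ∀ M : Matrix (Fin n) (Fin n) F,
      (Matrix.stdBasis F (Fin n) (Fin n)).repr M (i, j) = M i j := fun M => by
    simp [Matrix.stdBasis]
  rw [this, mul_single_mul_apply]
  rfl

/-- The trace of an idempotent determines the dimension of its corner. -/
theorem finrank_corner {e : Matrix (Fin n) (Fin n) F} (hidem : e * e = e) :
    (Module.finrank F (corner F e) : F) = e.trace ^ 2 := by
  rw [sq]
  exact finrank_range_mul_mul hidem hidem

theorem eq_zero_of_trace_eq_zero [CharZero F] {w : Matrix (Fin n) (Fin n) F} (hidem : w * w = w)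
    (h : w.trace = 0) : w = 0 := by
  have h1 := finrank_corner (F := F) hidem
  rw [h, zero_pow two_ne_zero, Nat.cast_eq_zero, Submodule.finrank_eq_zero] at h1
  have h2 : w ∈ corner F w := (mem_corner_iff hidem).2 ⟨hidem, hidem⟩
  rwa [h1, Submodule.mem_bot] at h2

theorem one_sub_idem {A : Type} [Ring A] {e : A} (hidem : e * e = e) :
    (1 - e) * (1 - e) = 1 - e := by
  simp [mul_sub, sub_mul, hidem]

/-- The corner `eRe` of a matrix algebra is central. -/
theorem corner_center {e : Matrix (Fin n) (Fin n) F} (hidem : e * e = e) (hne : e ≠ 0)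
    {z : Matrix (Fin n) (Fin n) F} (hz : z ∈ corner F e)
    (h : ∀ y ∈ corner F e, z * y = y * z) : ∃ c : F, z = c • e := by
  rw [mem_corner_iff hidem] at hz
  have key : ∀ x, z * x * e = e * x * z := by
    intro x
    have := h _ (mul_mul_mem_corner (F := F) e x)
    calc z * x * e = (z * e) * x * e := by rw [hz.2]
      _ = z * (e * x * e) := by simp only [mul_assoc]
      _ = e * x * (e * z) := by rw [this]; simp only [mul_assoc]
      _ = e * x * z := by rw [hz.1]
  obtain ⟨j, b, hjb⟩ : ∃ j b, e j b ≠ 0 := by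
    by_contra hcon
    push Not at hcon
    exact hne (Matrix.ext hcon)
  refine ⟨z j b / e j b, ?_⟩
  ext a i
  have h1 := mul_single_mul_apply z e i j a b
  have h2 := mul_single_mul_apply e z i j a b
  rw [key, h2] at h1
  rw [Matrix.smul_apply, smul_eq_mul]
  field_simp
  linear_combination -h1

variable {G : Type} [AddCommGroup G] [DecidableEq G]

/-- If `tr e = tr (1 - e)` for a graded primitive idempotent `e`, then `e` and `1 - e` are
connected by homogeneous elements of opposite degrees. -/
theorem exists_homogeneous_connection [CharZero F] {gr : G → Submodule F (Matrix (Fin n) (Fin n) F)}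
    (hgr : IsGrading gr) {e : Matrix (Fin n) (Fin n) F} (he : e ∈ gr 0) (hidem : e * e = e)
    (hne : e ≠ 0)
    (hprim : ∀ (g : G) (x : Matrix (Fin n) (Fin n) F), x ∈ gr g → x ∈ corner F e →
      x ≠ 0 → ∃ y ∈ corner F e, x * y = e ∧ y * x = e)
    (htr : e.trace = (1 - e).trace) :
    ∃ (k : G) (u v : Matrix (Fin n) (Fin n) F), u ∈ gr k ∧ v ∈ gr (-k) ∧ e * u = u ∧ u * e = 0 ∧
      v * e = v ∧ e * v = 0 ∧ u * v = e ∧ v * u = 1 - e := by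
  have hfidem := one_sub_idem hidem
  have hf0 : (1 - e) ∈ gr 0 := sub_mem hgr.one_mem he
  have hfne : 1 - e ≠ 0 := by
    intro h
    rw [h, Matrix.trace_zero] at htr
    exact hne (eq_zero_of_trace_eq_zero hidem htr)
  have hef : e * (1 - e) = 0 := by rw [mul_sub, hidem, mul_one, sub_self]
  have hfe : (1 - e) * e = 0 := by rw [sub_mul, hidem, one_mul, sub_self]
  set f := 1 - e with hf
  have hex : ∀ p q : Matrix (Fin n) (Fin n) F, p ≠ 0 → q ≠ 0 →
      ∃ g, ∃ r ∈ gr g, p * r * q ≠ 0 := by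
    intro p q hp hq
    by_contra hcon
    push Not at hcon
    have := hgr.linearMap_ext (L := LinearMap.mulLeft F p ∘ₗ LinearMap.mulRight F q) (M := 0)
      (fun g x hx => by simpa [mul_assoc] using hcon g x hx)
    rcases eq_zero_or_eq_zero_of_mul_mul (p := p) (q := q)
      (fun x => by simpa [mul_assoc] using this x) with h | h
    · exact hp h
    · exact hq h
  -- `u` is a nonzero homogeneous element of `eR(1 - e)`; `u s e` is invertible in `eRe`
  obtain ⟨k, r, hr, hu0⟩ := hex e f hne hfne
  have hu : e * r * f ∈ gr k := hgr.mul_zero_mem (hgr.zero_mul_mem he hr) hf0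
  have heu : e * (e * r * f) = e * r * f := by simp only [← mul_assoc, hidem]
  have huf : (e * r * f) * f = e * r * f := by rw [mul_assoc, hfidem]
  have hue : (e * r * f) * e = 0 := by rw [mul_assoc, hfe, mul_zero]
  set u := e * r * f
  obtain ⟨l, s, hs, hs0⟩ := hex u e hu0 hne
  have hx : u * s * e ∈ gr (k + l) := hgr.mul_zero_mem (hgr.mul_mem hu hs) he
  have hxc : u * s * e ∈ corner F e := by
    rw [mem_corner_iff hidem]
    exact ⟨by simp only [← mul_assoc, heu], by rw [mul_assoc, hidem]⟩
  obtain ⟨y, hyc, hxy, hyx⟩ := hprim _ _ hx hxc hs0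
  have hy := hgr.inv_mem he hidem hx hyc hxy hyx
  rw [mem_corner_iff hidem] at hyc
  have hv : f * s * e * y ∈ gr (-k) := by
    have := hgr.mul_mem (hgr.mul_zero_mem (hgr.zero_mul_mem hf0 hs) he) hy
    convert this using 2
    abel
  have hve : f * s * e * y * e = f * s * e * y := by rw [mul_assoc, hyc.2]
  have hev : e * (f * s * e * y) = 0 := by simp only [← mul_assoc, hef, zero_mul]
  have huv : u * (f * s * e * y) = e := by
    refine Eq.trans ?_ hxy
    simp only [← mul_assoc, huf]
  have hfv : f * (f * s * e * y) = f * s * e * y := by simp only [← mul_assoc, hfidem]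
  set v := f * s * e * y
  refine ⟨k, u, v, hu, hv, heu, hue, hve, hev, huv, ?_⟩
  -- `v u` is an idempotent below `1 - e` with the same trace, so the difference vanishes
  have hw : (f - v * u) * (f - v * u) = f - v * u := by
    have h1 : f * (v * u) = v * u := by rw [← mul_assoc, hfv]
    have h2 : v * u * f = v * u := by rw [mul_assoc, huf]
    have h3 : v * u * (v * u) = v * u := by
      rw [mul_assoc, ← mul_assoc u, huv, heu]
    rw [sub_mul, mul_sub f f, mul_sub (v * u) f, h1, h2, h3, hfidem]
    abel
  have := eq_zero_of_trace_eq_zero hw (by rw [Matrix.trace_sub, Matrix.trace_mul_comm v u, huv, htr,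
    sub_self])
  exact (sub_eq_zero.1 this).symm

end Matrices

/-! ### The corner algebra `eRe` -/

section CornerAlgebra

variable {F : Type} [Field F] {A : Type} [Ring A] [Algebra F A]

/-- The subspace `eAe` regarded as an `F`-algebra with identity element `e`. -/
def CornerRing (F : Type) [Field F] {A : Type} [Ring A] [Algebra F A] (e : A)
    (_hidem : e * e = e) : Type := corner F e

namespace CornerRing

variable {e : A} {hidem : e * e = e}

instance : AddCommGroup (CornerRing F e hidem) := inferInstanceAs (AddCommGroup (corner F e))

instance : Module F (CornerRing F e hidem) := inferInstanceAs (Module F (corner F e))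

variable (F e hidem) in
/-- The inclusion of `eAe` into `A`. -/
def incl : CornerRing F e hidem →ₗ[F] A := (corner F e).subtype

theorem incl_injective : Function.Injective (incl F e hidem) := Subtype.val_injective

theorem incl_mem (x : CornerRing F e hidem) : incl F e hidem x ∈ corner F e :=
  Subtype.property (p := fun y => y ∈ corner F e) x

theorem range_incl : LinearMap.range (incl F e hidem) = corner F e := Submodule.range_subtype _

theorem mul_mem_corner {e : A} (hidem : e * e = e) {x y : A} (hx : x ∈ corner F e)
    (hy : y ∈ corner F e) : x * y ∈ corner F e := by
  rw [mem_corner_iff hidem] at *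
  exact ⟨by rw [← mul_assoc, hx.1], by rw [mul_assoc, hy.2]⟩

instance : Mul (CornerRing F e hidem) :=
  ⟨fun x y => ⟨incl F e hidem x * incl F e hidem y,
    mul_mem_corner hidem (incl_mem x) (incl_mem y)⟩⟩

instance : One (CornerRing F e hidem) := ⟨⟨e, (mem_corner_iff hidem).2 ⟨hidem, hidem⟩⟩⟩

theorem incl_mul (x y : CornerRing F e hidem) :
    incl F e hidem (x * y) = incl F e hidem x * incl F e hidem y := rfl

theorem incl_one : incl F e hidem 1 = e := rfl

theorem incl_left (x : CornerRing F e hidem) : e * incl F e hidem x = incl F e hidem x :=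
  ((mem_corner_iff hidem).1 (incl_mem x)).1

theorem incl_right (x : CornerRing F e hidem) : incl F e hidem x * e = incl F e hidem x :=
  ((mem_corner_iff hidem).1 (incl_mem x)).2

instance : Ring (CornerRing F e hidem) :=
  { (inferInstance : AddCommGroup (CornerRing F e hidem)),
    (inferInstance : Mul (CornerRing F e hidem)),
    (inferInstance : One (CornerRing F e hidem)) with
    left_distrib := fun x y z => incl_injective (by simp only [incl_mul, map_add, mul_add])
    right_distrib := fun x y z => incl_injective (by simp only [incl_mul, map_add, add_mul])
    zero_mul := fun x => incl_injective (by simp only [incl_mul, map_zero, zero_mul])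
    mul_zero := fun x => incl_injective (by simp only [incl_mul, map_zero, mul_zero])
    mul_assoc := fun x y z => incl_injective (by simp only [incl_mul, mul_assoc])
    one_mul := fun x => incl_injective (by rw [incl_mul, incl_one, incl_left])
    mul_one := fun x => incl_injective (by rw [incl_mul, incl_one, incl_right]) }

instance : Algebra F (CornerRing F e hidem) :=
  Algebra.ofModule
    (fun r x y => incl_injective (by simp only [incl_mul, map_smul, smul_mul_assoc]))
    (fun r x y => incl_injective (by simp only [incl_mul, map_smul, mul_smul_comm]))

instance [FiniteDimensional F A] : FiniteDimensional F (CornerRing F e hidem) :=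
  inferInstanceAs (FiniteDimensional F (corner F e))

theorem exists_incl_eq (hidem : e * e = e) {x : A} (hx : x ∈ corner F e) :
    ∃ y : CornerRing F e hidem, incl F e hidem y = x := ⟨⟨x, hx⟩, rfl⟩

theorem nontrivial (hne : e ≠ 0) : Nontrivial (CornerRing F e hidem) :=
  ⟨1, 0, fun h => hne (by rw [← incl_one (F := F) (hidem := hidem), h, map_zero])⟩

end CornerRing

end CornerAlgebra

section Forward

variable {F : Type} [Field F] [IsAlgClosed F] [CharZero F] {n : ℕ}
  {G : Type} [AddCommGroup G] [DecidableEq G]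

open CornerRing

/-- If the graded division algebra `eRe` has an antiautomorphism preserving its components, then
it is graded isomorphic to some `Q^{⊗m}`. -/
theorem exists_corner_iso {gr : G → Submodule F (Matrix (Fin n) (Fin n) F)}
    (hgr : IsGrading gr) {e : Matrix (Fin n) (Fin n) F} (he : e ∈ gr 0) (hidem : e * e = e)
    (hne : e ≠ 0)
    (hprim : ∀ (g : G) (x : Matrix (Fin n) (Fin n) F), x ∈ gr g → x ∈ corner F e →
      x ≠ 0 → ∃ y ∈ corner F e, x * y = e ∧ y * x = e)
    (θ : Matrix (Fin n) (Fin n) F →ₗ[F] Matrix (Fin n) (Fin n) F)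
    (hθc : ∀ x ∈ corner F e, θ x ∈ corner F e)
    (hθg : ∀ g, ∀ x ∈ corner F e, x ∈ gr g → θ x ∈ gr g)
    (hθinj : ∀ x ∈ corner F e, θ x = 0 → x = 0)
    (hθmul : ∀ x ∈ corner F e, ∀ y ∈ corner F e, θ (x * y) = θ y * θ x) :
    ∃ m : ℕ, Module.finrank F (corner F e) = 4 ^ m ∧
      ∃ (ψ : Matrix (Fin n) (Fin n) F →ₗ[F] ⨂[F] _i : Fin m, Matrix (Fin 2) (Fin 2) F)
        (α : G → Fin m → ZMod 2 × ZMod 2),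
        Set.BijOn ψ (corner F e : Set (Matrix (Fin n) (Fin n) F)) Set.univ ∧
        (∀ x ∈ corner F e, ∀ y ∈ corner F e, ψ (x * y) = ψ x * ψ y) ∧
        (∀ g₁ g₂ : G, corner F e ⊓ gr g₁ ≠ ⊥ → corner F e ⊓ gr g₂ ≠ ⊥ →
          α (g₁ + g₂) = α g₁ + α g₂) ∧
        (∀ g₁ g₂ : G, corner F e ⊓ gr g₁ ≠ ⊥ → corner F e ⊓ gr g₂ ≠ ⊥ →
          α g₁ = α g₂ → g₁ = g₂) ∧
        (∀ a : Fin m → ZMod 2 × ZMod 2, ∃ g : G, corner F e ⊓ gr g ≠ ⊥ ∧ α g = a) ∧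
        (∀ g : G, corner F e ⊓ gr g ≠ ⊥ →
          Submodule.map ψ (corner F e ⊓ gr g) = qpowComp F m (α g)) := by
  let C := CornerRing F e hidem
  let ι : C →ₗ[F] Matrix (Fin n) (Fin n) F := incl F e hidem
  have hι : Function.Injective ι := incl_injective
  have hιc : ∀ x, ι x ∈ corner F e := incl_mem
  have : Nontrivial C := nontrivial hne
  let D : G → Submodule F C := fun g => (gr g).comap ι
  have hmap : ∀ g, (D g).map ι = corner F e ⊓ gr g := fun g => by
    rw [Submodule.map_comap_eq, range_incl]
  have hdiv : IsGradedDivision D :=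
    { one_mem := he
      mul_mem := fun g h a ha b hb => hgr.mul_mem ha hb
      inv := by
        intro g x hx hx0
        obtain ⟨y, hyc, h1, h2⟩ := hprim g (ι x) hx (hιc x) fun h => hx0 (hι (by rw [h, map_zero]))
        have hy := hgr.inv_mem he hidem hx hyc h1 h2
        obtain ⟨y, rfl⟩ := exists_incl_eq hidem hyc
        exact ⟨y, hy, hι h1, hι h2⟩ }
  let θc : C →ₗ[F] C := θ.restrict hθc
  have hιθ : ∀ x, ι (θc x) = θ (ι x) := fun x => rfl
  have hsigned : IsSignedDivision D :=
    { toIsGradedDivision := hdiv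
      indep := by
        rw [iSupIndep_iff_finsetSum_eq_zero_imp_eq_zero]
        intro s v hv h0 i hi
        apply hι
        rw [map_zero]
        refine (iSupIndep_iff_finsetSum_eq_zero_imp_eq_zero gr).1 hgr.indep s (fun i => ι (v i)) hv
          ?_ i hi
        rw [← map_sum, h0, map_zero]
      top := by
        -- every `x ∈ eRe` is `e x e`, and `x ↦ e x e` preserves the components of `R`
        let P : Matrix (Fin n) (Fin n) F →ₗ[F] C :=
          (LinearMap.mulLeft F e ∘ₗ LinearMap.mulRight F e).rangeRestrict
        have hP : ∀ x, ι (P x) = e * (x * e) := fun x => rfl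
        rw [eq_top_iff]
        intro x _
        have hx : x = P (ι x) := hι (by
          have h1 : e * ι x = ι x := incl_left x
          have h2 : ι x * e = ι x := incl_right x
          rw [hP, h2, h1])
        have key : ⊤ ≤ (iSup D).comap P := by
          rw [← hgr.iSup_eq_top]
          refine iSup_le fun g y hy => ?_
          refine Submodule.mem_iSup_of_mem g ?_
          change ι (P y) ∈ gr g
          rw [hP]
          exact hgr.zero_mul_mem he (hgr.mul_zero_mem hy he)
        rw [hx]
        exact key Submodule.mem_top
      comm := hdiv.comm_of_antiautomorphism θc
        ((injective_iff_map_eq_zero θc).2 fun x hx => hι (by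
          rw [map_zero]
          exact hθinj _ (hιc x) (by rw [← hιθ, hx, map_zero])))
        (fun x y => hι (hθmul _ (hιc x) _ (hιc y)))
        (fun g x hx => hθg g _ (hιc x) hx)
      center := by
        intro z hz
        obtain ⟨c, hc⟩ := corner_center hidem hne (hιc z) (by
          intro y hy
          obtain ⟨y, rfl⟩ := exists_incl_eq hidem hy
          exact congrArg ι (hz y))
        exact ⟨c, hι (by rw [map_smul]; exact hc)⟩ }
  obtain ⟨m, Ψ, d, hΨ, hd, hne', hsurj, hcomp⟩ := hsigned.exists_iso
  let E : (⨂[F] _i : Fin m, Matrix (Fin 2) (Fin 2) F) ≃ₗ[F] C :=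
    LinearEquiv.ofBijective Ψ.toLinearMap hΨ
  have hE : ∀ x, E x = Ψ x := fun x => rfl
  have hEmul : ∀ x y, E.symm (x * y) = E.symm x * E.symm y := fun x y => by
    apply E.injective
    have h := map_mul Ψ (E.symm x) (E.symm y)
    rw [← hE, ← hE, ← hE, E.apply_symm_apply, E.apply_symm_apply] at h
    rw [h, E.apply_symm_apply]
  obtain ⟨ρ, hρ⟩ := LinearMap.exists_leftInverse_of_injective ι (LinearMap.ker_eq_bot.2 hι)
  have hρ' : ∀ x, ρ (ι x) = x := fun x => LinearMap.congr_fun hρ x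
  have hbot : ∀ g, corner F e ⊓ gr g ≠ ⊥ ↔ D g ≠ ⊥ := fun g => by
    rw [← hmap, not_iff_not]
    refine ⟨fun h => ?_, fun h => by rw [h, Submodule.map_bot]⟩
    exact Submodule.map_injective_of_injective hι (by rw [h, Submodule.map_bot])
  have hα : ∀ a, Function.invFun d (d a) = a := Function.leftInverse_invFun hd
  refine ⟨m, ?_, E.symm.toLinearMap ∘ₗ ρ, Function.invFun d, ⟨fun _ _ => Set.mem_univ _, ?_, ?_⟩,
    ?_, ?_, ?_, ?_, ?_⟩
  · rw [← finrank_qpow F m]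
    exact E.symm.finrank_eq
  · intro x hx y hy hxy
    obtain ⟨x, rfl⟩ := exists_incl_eq hidem hx
    obtain ⟨y, rfl⟩ := exists_incl_eq hidem hy
    have h := E.symm.injective hxy
    change ρ (ι x) = ρ (ι y) at h
    rw [hρ', hρ'] at h
    rw [h]
  · intro t _
    refine ⟨ι (E t), hιc _, ?_⟩
    change E.symm (ρ (ι (E t))) = t
    rw [hρ', E.symm_apply_apply]
  · intro x hx y hy
    obtain ⟨x, rfl⟩ := exists_incl_eq hidem hx
    obtain ⟨y, rfl⟩ := exists_incl_eq hidem hy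
    change E.symm (ρ (ι (x * y))) = E.symm (ρ (ι x)) * E.symm (ρ (ι y))
    rw [hρ', hρ', hρ', hEmul]
  · intro g₁ g₂ h1 h2
    obtain ⟨a, rfl⟩ := hsurj _ ((hbot _).1 h1)
    obtain ⟨b, rfl⟩ := hsurj _ ((hbot _).1 h2)
    rw [← map_add, hα, hα, hα]
  · intro g₁ g₂ h1 h2 h
    obtain ⟨a, rfl⟩ := hsurj _ ((hbot _).1 h1)
    obtain ⟨b, rfl⟩ := hsurj _ ((hbot _).1 h2)
    rw [hα, hα] at h
    rw [h]
  · exact fun a => ⟨d a, (hbot _).2 (hne' a), hα a⟩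
  · intro g hg
    obtain ⟨a, rfl⟩ := hsurj _ ((hbot _).1 hg)
    rw [hα, ← hmap, ← hcomp, ← Submodule.map_comp, ← Submodule.map_comp]
    have hid : ((E.symm.toLinearMap ∘ₗ ρ) ∘ₗ ι) ∘ₗ Ψ.toLinearMap = LinearMap.id := by
      refine LinearMap.ext fun x => ?_
      change E.symm (ρ (ι (E x))) = x
      rw [hρ', E.symm_apply_apply]
    rw [hid, Submodule.map_id]

end Forward

/-! ### From a `φ`-grading to `Q^{⊗m}` -/

section ForwardMain

variable {F : Type} [Field F] [IsAlgClosed F] [CharZero F] {n : ℕ}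
  {G : Type} [AddCommGroup G] [DecidableEq G]

/-- On a component where `x ↦ e x - x e` is multiplication by `k`, it also equals
`x ↦ x φ(e) - φ(e) x`; hence `e + φ(e)` is central. As `φ(e)` is idempotent, only the values `1`
and `2` of this scalar can occur, the latter for `e = 1`. -/
theorem antiautomorphism_apply_idempotent {gr : G → Submodule F (Matrix (Fin n) (Fin n) F)}
    (hgr : IsGrading gr) (hfine : IsFine gr) {e : Matrix (Fin n) (Fin n) F} (he : e ∈ gr 0)
    (hidem : e * e = e) (hne : e ≠ 0)
    (φ : Matrix (Fin n) (Fin n) F →ₗ[F] Matrix (Fin n) (Fin n) F)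
    (hanti : ∀ x y, φ (x * y) = φ y * φ x) (hmap : ∀ g, Submodule.map φ (gr g) = gr g) :
    e = 1 ∨ φ e = 1 - e := by
  have h10 : (1 : Matrix (Fin n) (Fin n) F) ≠ 0 := fun h => hne (by rw [← mul_one e, h, mul_zero])
  have hcentral : ∀ x, (e + φ e) * x = x * (e + φ e) := by
    refine hgr.linearMap_ext (L := LinearMap.mulLeft F _) (M := LinearMap.mulRight F _) ?_
    intro g x hx
    obtain ⟨k, hk⟩ := exists_weight hgr hfine he hidem g
    have h1 := hk x hx
    rw [← hmap g] at hx
    obtain ⟨y, hy, rfl⟩ := hx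
    have h2 := congrArg φ (hk y hy)
    rw [map_sub, hanti, hanti, map_smul, ← h1] at h2
    simp only [LinearMap.mulLeft_apply, LinearMap.mulRight_apply, add_mul, mul_add]
    rw [sub_eq_sub_iff_add_eq_add] at h2
    rw [add_comm (φ y * e), h2]
  obtain ⟨c, hc⟩ := corner_center (F := F) (one_mul 1) h10
    ((mem_corner_iff (one_mul 1)).2 ⟨one_mul _, mul_one _⟩) fun y _ => hcentral y
  have hφ : φ e = c • 1 - e := by rw [← hc]; abel
  have hφidem : φ e * φ e = φ e := by rw [← hanti, hidem]
  have h1 : (c - 1) • (c • (1 : Matrix (Fin n) (Fin n) F) - (2 : F) • e) = 0 := by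
    have : φ e * φ e = (c * c) • (1 : Matrix (Fin n) (Fin n) F) - (2 * c) • e + e := by
      rw [hφ, sub_mul, mul_sub, mul_sub, hidem, smul_mul_smul_comm, one_mul, smul_mul_assoc, one_mul,
        mul_smul_comm, mul_one, two_mul, add_smul]
      abel
    rw [hφidem, hφ] at this
    have h2 : (c * c) • (1 : Matrix (Fin n) (Fin n) F) - (2 * c) • e + e - (c • 1 - e) = 0 := by
      rw [← this, sub_self]
    rw [← h2]
    module
  rcases smul_eq_zero.1 h1 with h2 | h2
  · right
    rw [hφ, sub_eq_zero.1 h2, one_smul]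
  · left
    have h3 : c • e = (2 : F) • e := by
      have := congrArg (· * e) (sub_eq_zero.1 h2)
      simpa [hidem] using this
    have h4 : c = 2 := smul_left_injective F hne h3
    rw [h4] at h2
    exact (smul_right_injective _ (two_ne_zero (α := F)) (sub_eq_zero.1 h2)).symm

theorem corner_one : corner F (1 : Matrix (Fin n) (Fin n) F) = ⊤ := by
  rw [eq_top_iff]
  exact fun x _ => (mem_corner_iff (one_mul 1)).2 ⟨one_mul x, mul_one x⟩

/-- An antiautomorphism exchanging `e` and `1 - e` forces both to have the same trace. -/
theorem trace_eq_of_swap {e : Matrix (Fin n) (Fin n) F} (hidem : e * e = e) (hne : e ≠ 0)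
    (φ : Matrix (Fin n) (Fin n) F →ₗ[F] Matrix (Fin n) (Fin n) F) (hbij : Function.Bijective φ)
    (hanti : ∀ x y, φ (x * y) = φ y * φ x) (hφe : φ e = 1 - e) : e.trace = (1 - e).trace := by
  have hcor : Submodule.map φ (corner F e) = corner F (1 - e) := by
    apply le_antisymm
    · rintro _ ⟨x, hx, rfl⟩
      have hx := (mem_corner_iff hidem).1 hx
      rw [mem_corner_iff (one_sub_idem hidem), ← hφe, ← hanti, ← hanti, hx.1, hx.2]
      exact ⟨rfl, rfl⟩
    · rintro y hy
      have hy := (mem_corner_iff (one_sub_idem hidem)).1 hy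
      obtain ⟨x, rfl⟩ := hbij.2 y
      rw [← hφe, ← hanti, ← hanti] at hy
      exact ⟨x, (mem_corner_iff hidem).2 ⟨hbij.1 hy.2, hbij.1 hy.1⟩, rfl⟩
  have hdim := (Submodule.equivMapOfInjective φ hbij.1 (corner F e)).finrank_eq
  rw [hcor] at hdim
  have h1 := finrank_corner (F := F) hidem
  rw [hdim, finrank_corner (one_sub_idem hidem)] at h1
  rcases sq_eq_sq_iff_eq_or_eq_neg.1 h1 with h | h
  · exact h.symm
  · exfalso
    have hsum : (n : F) = 0 := by
      have := Matrix.trace_sub (1 : Matrix (Fin n) (Fin n) F) e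
      rw [h, Matrix.trace_one, Fintype.card_fin] at this
      linear_combination -this
    rw [Nat.cast_eq_zero] at hsum
    subst hsum
    exact hne (Subsingleton.elim _ _)

end ForwardMain

/-! ### From `Q^{⊗m}` to a `φ`-grading -/

section Backward

variable {F : Type} [Field F] {n : ℕ}

/-- The transpose on each tensor factor of `Q^{⊗m}`. -/
def qpowTranspose (F : Type) [Field F] (m : ℕ) :
    (⨂[F] _i : Fin m, Matrix (Fin 2) (Fin 2) F) →ₗ[F] ⨂[F] _i : Fin m, Matrix (Fin 2) (Fin 2) F :=
  PiTensorProduct.map fun _ => (Matrix.transposeLinearEquiv (Fin 2) (Fin 2) F F).toLinearMap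

theorem qpowTranspose_tprod (m : ℕ) (v : Fin m → Matrix (Fin 2) (Fin 2) F) :
    qpowTranspose F m (PiTensorProduct.tprod F v) = PiTensorProduct.tprod F fun i => (v i).transpose := by
  simp [qpowTranspose]

theorem qpowTranspose_self (m : ℕ) (x : ⨂[F] _i : Fin m, Matrix (Fin 2) (Fin 2) F) :
    qpowTranspose F m (qpowTranspose F m x) = x := by
  induction x using PiTensorProduct.induction_on with
  | smul_tprod r v => simp [qpowTranspose_tprod]
  | add x y hx hy => rw [map_add, map_add, hx, hy]

theorem qpowTranspose_mul (m : ℕ) (x y : ⨂[F] _i : Fin m, Matrix (Fin 2) (Fin 2) F) :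
    qpowTranspose F m (x * y) = qpowTranspose F m y * qpowTranspose F m x := by
  induction x using PiTensorProduct.induction_on with
  | add x z hx hz => rw [add_mul, map_add, map_add, mul_add, hx, hz]
  | smul_tprod r v =>
    induction y using PiTensorProduct.induction_on with
    | add y z hy hz => rw [mul_add, map_add, map_add, add_mul, hy, hz]
    | smul_tprod s w =>
      rw [PiTensorProduct.smul_tprod_mul_smul_tprod]
      simp only [map_smul, qpowTranspose_tprod, Pi.mul_apply, Matrix.transpose_mul]
      rw [PiTensorProduct.smul_tprod_mul_smul_tprod, mul_comm r s]
      rfl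

theorem qpowTranspose_mem (m : ℕ) (a : Fin m → ZMod 2 × ZMod 2)
    {x : ⨂[F] _i : Fin m, Matrix (Fin 2) (Fin 2) F} (hx : x ∈ qpowComp F m a) :
    qpowTranspose F m x ∈ qpowComp F m a := by
  rw [qpowComp_eq] at *
  obtain ⟨c, rfl⟩ := Submodule.mem_span_singleton.1 hx
  rw [map_smul, qpowTranspose_tprod]
  choose ε hε using fun i => transpose_pauli F (a i)
  simp only [hε]
  rw [MultilinearMap.map_smul_univ]
  exact Submodule.smul_mem _ _ (Submodule.smul_mem _ _ (Submodule.mem_span_singleton_self _))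

variable {G : Type} [AddCommGroup G] [DecidableEq G]

/-- The componentwise transpose of `Q^{⊗m}`, transported to `eRe`, is an involution preserving the
components. -/
theorem exists_corner_involution [CharZero F] {gr : G → Submodule F (Matrix (Fin n) (Fin n) F)}
    {e : Matrix (Fin n) (Fin n) F} (hidem : e * e = e) {m : ℕ}
    (ψ : Matrix (Fin n) (Fin n) F →ₗ[F] ⨂[F] _i : Fin m, Matrix (Fin 2) (Fin 2) F)
    (α : G → Fin m → ZMod 2 × ZMod 2)
    (hbij : Set.BijOn ψ (corner F e : Set (Matrix (Fin n) (Fin n) F)) Set.univ)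
    (hmul : ∀ x ∈ corner F e, ∀ y ∈ corner F e, ψ (x * y) = ψ x * ψ y)
    (hcomp : ∀ g : G, corner F e ⊓ gr g ≠ ⊥ →
      Submodule.map ψ (corner F e ⊓ gr g) = qpowComp F m (α g)) :
    Module.finrank F (corner F e) = 4 ^ m ∧
      ∃ θ : Matrix (Fin n) (Fin n) F →ₗ[F] Matrix (Fin n) (Fin n) F,
        (∀ x, θ x ∈ corner F e) ∧ (∀ x ∈ corner F e, θ (θ x) = x) ∧
        (∀ x ∈ corner F e, ∀ y ∈ corner F e, θ (x * y) = θ y * θ x) ∧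
        ∀ g, ∀ x ∈ corner F e, x ∈ gr g → θ x ∈ gr g := by
  have hinj : ∀ x ∈ corner F e, ∀ y ∈ corner F e, ψ x = ψ y → x = y :=
    fun x hx y hy h => hbij.injOn hx hy h
  let E : corner F e ≃ₗ[F] ⨂[F] _i : Fin m, Matrix (Fin 2) (Fin 2) F :=
    LinearEquiv.ofBijective (ψ.domRestrict (corner F e))
      ⟨fun x y h => Subtype.ext (hinj _ x.2 _ y.2 h), fun t => by
        obtain ⟨x, hx, rfl⟩ := hbij.surjOn (Set.mem_univ t)
        exact ⟨⟨x, hx⟩, rfl⟩⟩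
  have hE : ∀ t, ψ (E.symm t) = t := fun t => E.apply_symm_apply t
  let θ : Matrix (Fin n) (Fin n) F →ₗ[F] Matrix (Fin n) (Fin n) F :=
    (corner F e).subtype ∘ₗ E.symm.toLinearMap ∘ₗ qpowTranspose F m ∘ₗ ψ
  have hθc : ∀ x, θ x ∈ corner F e := fun x => Subtype.property _
  have hψθ : ∀ x, ψ (θ x) = qpowTranspose F m (ψ x) := fun x => hE _
  refine ⟨by rw [← finrank_qpow F m, E.finrank_eq], θ, hθc, fun x hx => ?_, fun x hx y hy => ?_,
    fun g x hx hxg => ?_⟩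
  · apply hinj _ (hθc _) _ hx
    rw [hψθ, hψθ, qpowTranspose_self]
  · apply hinj _ (hθc _) _ (CornerRing.mul_mem_corner hidem (hθc _) (hθc _))
    rw [hmul _ (hθc _) _ (hθc _), hψθ, hψθ, hψθ, hmul _ hx _ hy, qpowTranspose_mul]
  · by_cases hg : corner F e ⊓ gr g = ⊥
    · have : x ∈ corner F e ⊓ gr g := ⟨hx, hxg⟩
      rw [hg, Submodule.mem_bot] at this
      rw [this, map_zero]
      exact zero_mem _
    · have h1 : ψ x ∈ qpowComp F m (α g) := by
        rw [← hcomp g hg]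
        exact ⟨x, ⟨hx, hxg⟩, rfl⟩
      have h2 := qpowTranspose_mem m _ h1
      rw [← hcomp g hg, ← hψθ] at h2
      obtain ⟨y, hy, hyx⟩ := h2
      rw [← hinj y hy.1 _ (hθc _) hyx]
      exact hy.2

/-- Comparing dimensions, an idempotent with `dim eRe = 4^m` has trace `2^m` in size `2^{m+1}`:
the trace `-2^m` would make the complementary corner larger than `R`. -/
theorem trace_eq_of_finrank [CharZero F] {e : Matrix (Fin n) (Fin n) F} (hidem : e * e = e) {m : ℕ}
    (hdim : Module.finrank F (corner F e) = 4 ^ m) (hn : n = 2 ^ (m + 1)) :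
    e.trace = (1 - e).trace := by
  have h1 := finrank_corner (F := F) hidem
  have h2 := finrank_corner (F := F) (one_sub_idem hidem)
  have htr : (1 - e).trace = 2 * 2 ^ m - e.trace := by
    have hn' : (n : F) = 2 * 2 ^ m := by rw [hn]; push_cast; ring
    rw [Matrix.trace_sub, Matrix.trace_one, Fintype.card_fin, hn']
  have h4 : (4 : F) ^ m = (2 ^ m) ^ 2 := by
    rw [← pow_mul, mul_comm, pow_mul]; norm_num
  rw [hdim] at h1
  push_cast at h1
  rw [h4] at h1
  rcases sq_eq_sq_iff_eq_or_eq_neg.1 h1.symm with h | h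
  · rw [htr, h]; ring
  · exfalso
    rw [htr, h] at h2
    have h5 : Module.finrank F (corner F (1 - e)) = 9 * 4 ^ m := by
      have : ((Module.finrank F (corner F (1 - e)) : ℕ) : F) = ((9 * 4 ^ m : ℕ) : F) := by
        rw [h2]; push_cast; rw [h4]; ring
      exact_mod_cast this
    have h6 := Submodule.finrank_le (corner F (1 - e))
    rw [h5, Module.finrank_matrix] at h6
    simp only [Fintype.card_fin, Module.finrank_self, mul_one] at h6
    have h7 : n * n = 4 * 4 ^ m := by
      rw [hn, ← mul_pow]; norm_num [pow_succ, mul_comm]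
    have h8 : 0 < 4 ^ m := by positivity
    omega

/-- Let `u` and `v` connect `e` and `1 - e`, so that `R` is the algebra of `2 × 2` matrices over
`eRe`. An involution `θ` of `eRe` extends to `R` by applying `θ` to the entries and reflecting in
the antidiagonal. -/
theorem exists_involution_of_connection {gr : G → Submodule F (Matrix (Fin n) (Fin n) F)}
    (hgr : IsGrading gr) {e : Matrix (Fin n) (Fin n) F} (he : e ∈ gr 0) (hidem : e * e = e)
    {k : G} {u v : Matrix (Fin n) (Fin n) F} (hu : u ∈ gr k) (hv : v ∈ gr (-k)) (heu : e * u = u)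
    (hue : u * e = 0) (hve : v * e = v) (hev : e * v = 0) (huv : u * v = e) (hvu : v * u = 1 - e)
    (θ : Matrix (Fin n) (Fin n) F →ₗ[F] Matrix (Fin n) (Fin n) F)
    (hθc : ∀ x, θ x ∈ corner F e) (hθθ : ∀ x ∈ corner F e, θ (θ x) = x)
    (hθmul : ∀ x ∈ corner F e, ∀ y ∈ corner F e, θ (x * y) = θ y * θ x)
    (hθg : ∀ g, ∀ x ∈ corner F e, x ∈ gr g → θ x ∈ gr g) :
    ∃ φ : Matrix (Fin n) (Fin n) F →ₗ[F] Matrix (Fin n) (Fin n) F,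
      (∀ x y, φ (x * y) = φ y * φ x) ∧ (∀ x, φ (φ x) = x) ∧ ∀ g, ∀ x ∈ gr g, φ x ∈ gr g := by
  have hc : ∀ p x q : Matrix (Fin n) (Fin n) F, e * p = p → q * e = q → p * x * q ∈ corner F e :=
    fun p x q hp hq => (mem_corner_iff hidem).2
      ⟨by rw [← mul_assoc, ← mul_assoc, hp], by rw [mul_assoc, hq]⟩
  have hθl : ∀ x, e * θ x = θ x := fun x => ((mem_corner_iff hidem).1 (hθc x)).1
  have hθr : ∀ x, θ x * e = θ x := fun x => ((mem_corner_iff hidem).1 (hθc x)).2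
  have huθ : ∀ x, u * θ x = 0 := fun x => by rw [← hθl, ← mul_assoc, hue, zero_mul]
  have hθv : ∀ x, θ x * v = 0 := fun x => by rw [← hθr, mul_assoc, hev, mul_zero]
  -- products of blocks, from `1 = e e + v u`
  have hprod : ∀ p x y q : Matrix (Fin n) (Fin n) F,
      p * (x * y) * q = (p * x * e) * (e * y * q) + (p * x * v) * (u * y * q) := by
    intro p x y q
    have h1 : e * e + v * u = 1 := by rw [hidem, hvu]; abel
    calc p * (x * y) * q = p * x * (e * e + v * u) * (y * q) := by
          rw [h1, mul_one]; simp only [mul_assoc]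
      _ = _ := by rw [mul_add, add_mul]; simp only [mul_assoc]
  have hext : ∀ x y : Matrix (Fin n) (Fin n) F, e * x * e = e * y * e → e * x * v = e * y * v →
      u * x * e = u * y * e → u * x * v = u * y * v → x = y := by
    have hdec : ∀ x : Matrix (Fin n) (Fin n) F, x = e * x * e + (e * x * v) * u +
        v * (u * x * e) + v * (u * x * v) * u := by
      intro x
      have h1 : (e * x * v) * u = e * x * (1 - e) := by rw [← hvu, mul_assoc]
      have h2 : v * (u * x * e) = (1 - e) * x * e := by rw [← hvu]; simp only [mul_assoc]
      have h3 : v * (u * x * v) * u = (1 - e) * x * (1 - e) := by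
        rw [← hvu]; simp only [mul_assoc]
      rw [h1, h2, h3]
      noncomm_ring
    intro x y h1 h2 h3 h4
    rw [hdec x, hdec y, h1, h2, h3, h4]
  let S : Matrix (Fin n) (Fin n) F → Matrix (Fin n) (Fin n) F →
      Matrix (Fin n) (Fin n) F →ₗ[F] Matrix (Fin n) (Fin n) F :=
    fun p q => θ ∘ₗ LinearMap.mulRight F q ∘ₗ LinearMap.mulLeft F p
  let φ : Matrix (Fin n) (Fin n) F →ₗ[F] Matrix (Fin n) (Fin n) F :=
    S u v + LinearMap.mulRight F u ∘ₗ S e v + LinearMap.mulLeft F v ∘ₗ S u e +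
      LinearMap.mulLeft F v ∘ₗ LinearMap.mulRight F u ∘ₗ S e e
  have hφ : ∀ x, φ x = θ (u * x * v) + θ (e * x * v) * u + v * θ (u * x * e) +
      v * (θ (e * x * e) * u) := fun x => rfl
  have hφee : ∀ x, e * φ x * e = θ (u * x * v) := fun x => by
    rw [hφ]
    simp only [mul_add, add_mul, ← mul_assoc, hev, hθl, hθr, zero_mul, add_zero]
    simp only [mul_assoc, hue, mul_zero, add_zero]
  have hφev : ∀ x, e * φ x * v = θ (e * x * v) := fun x => by
    rw [hφ]
    simp only [mul_add, add_mul, ← mul_assoc, hev, hθl, hθv, zero_mul, add_zero, zero_add]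
    rw [mul_assoc, huv, hθr]
  have hφue : ∀ x, u * φ x * e = θ (u * x * e) := fun x => by
    rw [hφ]
    simp only [mul_add, add_mul, ← mul_assoc, huθ, huv, hθl, hθr, zero_mul, zero_add]
    rw [mul_assoc (θ (e * x * e)) u e, hue, mul_zero, add_zero]
  have hφuv : ∀ x, u * φ x * v = θ (e * x * e) := fun x => by
    rw [hφ]
    simp only [mul_add, add_mul, ← mul_assoc, huθ, huv, hθl, hθv, zero_mul, zero_add]
    rw [mul_assoc, huv, hθr]
  have cee := fun x => hc e x e hidem hidem
  have cev := fun x => hc e x v hidem hve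
  have cue := fun x => hc u x e heu hidem
  have cuv := fun x => hc u x v heu hve
  refine ⟨φ, fun x y => ?_, fun x => ?_, fun g x hx => ?_⟩
  · apply hext
    · rw [hφee, hprod, hprod, map_add, hθmul _ (cue x) _ (cev y), hθmul _ (cuv x) _ (cuv y),
        hφee, hφee, hφev, hφue, add_comm]
    · rw [hφev, hprod, hprod, map_add, hθmul _ (cee x) _ (cev y), hθmul _ (cev x) _ (cuv y),
        hφee, hφev, hφev, hφuv, add_comm]
    · rw [hφue, hprod, hprod, map_add, hθmul _ (cue x) _ (cee y), hθmul _ (cuv x) _ (cue y),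
        hφee, hφue, hφue, hφuv, add_comm]
    · rw [hφuv, hprod, hprod, map_add, hθmul _ (cee x) _ (cee y), hθmul _ (cev x) _ (cue y),
        hφuv, hφue, hφev, hφuv, add_comm]
  · apply hext
    · rw [hφee, hφuv, hθθ _ (cee x)]
    · rw [hφev, hφev, hθθ _ (cev x)]
    · rw [hφue, hφue, hθθ _ (cue x)]
    · rw [hφuv, hφee, hθθ _ (cuv x)]
  · have h1 : θ (u * x * v) ∈ gr g := by
      refine hθg _ _ (cuv x) ?_
      have := hgr.mul_mem (hgr.mul_mem hu hx) hv
      rwa [add_comm k g, add_neg_cancel_right] at this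
    have h2 : θ (e * x * v) * u ∈ gr g := by
      have := hgr.mul_mem (hθg _ _ (cev x) (hgr.mul_mem (hgr.zero_mul_mem he hx) hv)) hu
      rwa [neg_add_cancel_right] at this
    have h3 : v * θ (u * x * e) ∈ gr g := by
      have := hgr.mul_mem hv (hθg _ _ (cue x) (hgr.mul_zero_mem (hgr.mul_mem hu hx) he))
      rwa [neg_add_cancel_left] at this
    have h4 : v * (θ (e * x * e) * u) ∈ gr g := by
      have := hgr.mul_mem hv (hgr.mul_mem (hθg _ _ (cee x) (hgr.mul_zero_mem
        (hgr.zero_mul_mem he hx) he)) hu)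
      rwa [add_comm g k, neg_add_cancel_left] at this
    rw [hφ]
    exact add_mem (add_mem (add_mem h1 h2) h3) h4

end Backward

/-! ### The equivalence -/

/-- Let `Γ` be a fine grading of `R = Mat_n(F)` and `e` a graded primitive
idempotent.  Then `Γ` is a `φ`-grading for some antiautomorphism `φ` of `R` if and only if the
central graded division algebra `eRe` is graded isomorphic to `Q^{⊗m}` (with its
`ℤ₂^{2m}`-grading) for some `m ≥ 0` and either `n = 2^m` or `n = 2^{m+1}`. -/
theorem stmt_13 (F : Type) [Field F] [IsAlgClosed F] [CharZero F] (n : ℕ)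
    (G : Type) [AddCommGroup G] [DecidableEq G]
    (gr : G → Submodule F (Matrix (Fin n) (Fin n) F))
    (hgr : IsGrading gr) (hfine : IsFine gr)
    (e : Matrix (Fin n) (Fin n) F)
    (he : e ∈ gr 0) (hidem : e * e = e) (hne : e ≠ 0)
    -- `e` is a graded primitive idempotent
    (hprim : ∀ (g : G) (x : Matrix (Fin n) (Fin n) F), x ∈ gr g → x ∈ corner F e →
      x ≠ 0 → ∃ y ∈ corner F e, x * y = e ∧ y * x = e) :
    -- `Γ` is a `φ`-grading for some antiautomorphism `φ` of `R` ...
    (∃ φ : Matrix (Fin n) (Fin n) F →ₗ[F] Matrix (Fin n) (Fin n) F,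
      Function.Bijective φ ∧
      (∀ x y : Matrix (Fin n) (Fin n) F, φ (x * y) = φ y * φ x) ∧
      (∀ g : G, Submodule.map φ (gr g) = gr g) ∧
      (∀ g : G, ∃ α : F, α ≠ 0 ∧ ∀ x ∈ gr g, φ (φ x) = α • x) ∧
      (∀ x ∈ gr 0, φ (φ x) = x))
    ↔
    -- ... iff `eRe` is graded isomorphic to `Q^{⊗m}` and `n = 2^m` or `n = 2^{m+1}`
    (∃ m : ℕ, (n = 2 ^ m ∨ n = 2 ^ (m + 1)) ∧
      ∃ (ψ : Matrix (Fin n) (Fin n) F →ₗ[F] ⨂[F] _i : Fin m, Matrix (Fin 2) (Fin 2) F)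
        (α : G → Fin m → ZMod 2 × ZMod 2),
        Set.BijOn ψ (corner F e : Set (Matrix (Fin n) (Fin n) F)) Set.univ ∧
        (∀ x ∈ corner F e, ∀ y ∈ corner F e, ψ (x * y) = ψ x * ψ y) ∧
        (∀ g₁ g₂ : G, corner F e ⊓ gr g₁ ≠ ⊥ → corner F e ⊓ gr g₂ ≠ ⊥ →
          α (g₁ + g₂) = α g₁ + α g₂) ∧
        (∀ g₁ g₂ : G, corner F e ⊓ gr g₁ ≠ ⊥ → corner F e ⊓ gr g₂ ≠ ⊥ →
          α g₁ = α g₂ → g₁ = g₂) ∧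
        (∀ a : Fin m → ZMod 2 × ZMod 2, ∃ g : G, corner F e ⊓ gr g ≠ ⊥ ∧ α g = a) ∧
        (∀ g : G, corner F e ⊓ gr g ≠ ⊥ →
          Submodule.map ψ (corner F e ⊓ gr g) = qpowComp F m (α g))) := by
  constructor
  · rintro ⟨φ, hbij, hanti, hmap, -, -⟩
    have hφg : ∀ g, ∀ x ∈ gr g, φ x ∈ gr g := fun g x hx => by
      rw [← hmap g]
      exact Submodule.mem_map_of_mem hx
    rcases antiautomorphism_apply_idempotent hgr hfine he hidem hne φ hanti hmap with h1 | hφe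
    · obtain ⟨m, hdim, hψ⟩ := exists_corner_iso hgr he hidem hne hprim φ
        (fun x _ => by rw [h1, corner_one]; exact Submodule.mem_top) (fun g x _ hx => hφg g x hx)
        (fun x _ hx => hbij.1 (hx.trans (map_zero φ).symm)) fun x _ y _ => hanti x y
      refine ⟨m, Or.inl ?_, hψ⟩
      have htr := finrank_corner (F := F) hidem
      rw [hdim, h1, Matrix.trace_one, Fintype.card_fin] at htr
      have h2 : n ^ 2 = (2 ^ m) ^ 2 := by
        rw [← pow_mul, mul_comm m, pow_mul]
        exact_mod_cast htr.symm
      exact Nat.pow_left_injective two_ne_zero h2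
    · have htr := trace_eq_of_swap hidem hne φ hbij hanti hφe
      obtain ⟨k, u, v, hu, hv, heu, -, hve, -, huv, hvu⟩ :=
        exists_homogeneous_connection hgr he hidem hne hprim htr
      have hφl : ∀ x ∈ corner F e, (1 - e) * φ x = φ x := fun x hx => by
        rw [← hφe, ← hanti, ((mem_corner_iff hidem).1 hx).2]
      have hφr : ∀ x ∈ corner F e, φ x * (1 - e) = φ x := fun x hx => by
        rw [← hφe, ← hanti, ((mem_corner_iff hidem).1 hx).1]
      -- `φ` maps `eRe` to `(1 - e)R(1 - e)`, and `u`, `v` transport the latter back to `eRe`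
      let θ : Matrix (Fin n) (Fin n) F →ₗ[F] Matrix (Fin n) (Fin n) F :=
        LinearMap.mulRight F v ∘ₗ LinearMap.mulLeft F u ∘ₗ φ
      have hθ : ∀ x, θ x = u * φ x * v := fun x => rfl
      obtain ⟨m, hdim, hψ⟩ := exists_corner_iso hgr he hidem hne hprim θ
        (fun x _ => by
          rw [hθ, mem_corner_iff hidem]
          exact ⟨by rw [← mul_assoc, ← mul_assoc, heu], by rw [mul_assoc, hve]⟩)
        (fun g x _ hx => by
          have := hgr.mul_mem (hgr.mul_mem hu (hφg g x hx)) hv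
          rwa [add_comm k g, add_neg_cancel_right] at this)
        (fun x hx h0 => by
          have h3 : v * (u * φ x * v) * u = φ x := by
            calc v * (u * φ x * v) * u = (v * u) * φ x * (v * u) := by simp only [mul_assoc]
              _ = φ x := by rw [hvu, hφl x hx, hφr x hx]
          rw [← hθ, h0, mul_zero, zero_mul] at h3
          exact hbij.1 (h3.symm.trans (map_zero φ).symm))
        (fun x hx y hy => by
          calc θ (x * y) = u * (φ y * φ x) * v := by rw [hθ, hanti]
            _ = u * (φ y * (v * u) * φ x) * v := by rw [hvu, hφr y hy]
            _ = θ y * θ x := by rw [hθ, hθ]; simp only [mul_assoc])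
      refine ⟨m, Or.inr ?_, hψ⟩
      have hdim' := finrank_corner (F := F) hidem
      rw [hdim] at hdim'
      rw [Matrix.trace_sub, Matrix.trace_one, Fintype.card_fin] at htr
      have h2 : n ^ 2 = (2 ^ (m + 1)) ^ 2 := by
        have h3 : ((n ^ 2 : ℕ) : F) = ((4 * 4 ^ m : ℕ) : F) := by
          push_cast at hdim' ⊢
          rw [hdim']
          linear_combination (-(n : F) - 2 * e.trace) * htr
        rw [← pow_mul, mul_comm (m + 1), pow_mul, Nat.cast_injective h3]
        ring
      exact Nat.pow_left_injective two_ne_zero h2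
  · rintro ⟨m, hn, ψ, α, hψbij, hψmul, -, -, -, hcomp⟩
    obtain ⟨hdim, θ, hθc, hθθ, hθmul, hθg⟩ :=
      exists_corner_involution hidem ψ α hψbij hψmul hcomp
    -- it suffices to find an involution preserving the components
    suffices h : ∃ φ : Matrix (Fin n) (Fin n) F →ₗ[F] Matrix (Fin n) (Fin n) F,
        (∀ x y, φ (x * y) = φ y * φ x) ∧ (∀ x, φ (φ x) = x) ∧ ∀ g, ∀ x ∈ gr g, φ x ∈ gr g by
      obtain ⟨φ, hanti, hinv, hφg⟩ := h
      refine ⟨φ, Function.Involutive.bijective hinv, hanti, fun g => le_antisymm ?_ ?_,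
        fun g => ⟨1, one_ne_zero, fun x _ => by rw [hinv, one_smul]⟩, fun x _ => hinv x⟩
      · rintro _ ⟨x, hx, rfl⟩
        exact hφg g x hx
      · exact fun x hx => ⟨φ x, hφg g x hx, hinv x⟩
    rcases hn with hn | hn
    · have htop : corner F e = ⊤ := by
        apply Submodule.eq_top_of_finrank_eq
        rw [hdim, Module.finrank_matrix, Fintype.card_fin, Module.finrank_self, mul_one]
        have h2 : n * n = 4 ^ m := by rw [hn, ← mul_pow]; norm_num
        exact h2.symm
      have hc : ∀ x, x ∈ corner F e := fun x => htop ▸ Submodule.mem_top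
      exact ⟨θ, fun x y => hθmul x (hc x) y (hc y), fun x => hθθ x (hc x),
        fun g x hx => hθg g x (hc x) hx⟩
    · obtain ⟨k, u, v, hu, hv, heu, hue, hve, hev, huv, hvu⟩ :=
        exists_homogeneous_connection hgr he hidem hne hprim (trace_eq_of_finrank hidem hdim hn)
      exact exists_involution_of_connection hgr he hidem hu hv heu hue hve hev huv hvu θ hθc hθθ
        hθmul hθg

end
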